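/- If a real line arrangement 𝓛 of ℓ lines is the union 𝓛' ∪ L where L is a simple line (L meets every line of 𝓛' in a distinct double point), then π₁(ℂ² \ 𝓛) ≅ π₁(ℂ² \ 𝓛') × ℤ. -/

import Mathlib

open scoped Classical
/-- A real line, viewed inside `ℂ²`: the complex solution set of a real affine
equation. -/
def IsRealCLine (l : Set (ℂ × ℂ)) : Prop :=
  ∃ a b c : ℝ, (a, b) ≠ (0, 0) ∧
    l = {p : ℂ × ℂ | (a : ℂ) * p.1 + (b : ℂ) * p.2 = (c : ℂ)}

/-!
Choose coordinates in which `L₀` is the axis `y = 0` and the other lines are `x = a + f a * y`, with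
small real slopes `f a` and distinct real `a`. A tube around the axis, made of discs in lines of
these slopes, is then a product with the punctured axis. A point with nonreal `y` lies on exactly
one real line; shrinking it along that line towards the axis moves it into the tube without meeting
the arrangement, and paths crossing the hyperplane `Im y = 0` can be pushed into the tube by
convexity. So, as in the Lefschetz–Zariski theorem, the fundamental group of the punctured tube
surjects onto that of the complement of the arrangement. In the punctured tube the meridian of `L₀`
commutes with every loop, hence it is central in the complement.

By van Kampen's theorem, used in the form of cocycles on paths, filling `L₀` back in kills exactly
the normal closure of the meridian, which by centrality is the cyclic group it generates. The
winding number of `y` sends the meridian to `1`, so it splits off this cyclic group as a factor `ℤ`.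
-/

namespace SimpleLine

section PathClasses

open CategoryTheory unitInterval

variable {X Y : Type*} [TopologicalSpace X] [TopologicalSpace Y]

/-- The homotopy class of a path relative to its endpoints, as an arrow of the fundamental
groupoid. -/
def pathClass {p q : X} (γ : Path p q) : FundamentalGroupoid.mk p ⟶ FundamentalGroupoid.mk q :=
  Path.Homotopic.Quotient.mk γ

lemma pathClass_trans {p q r : X} (γ : Path p q) (δ : Path q r) :
    pathClass (γ.trans δ) = pathClass γ ≫ pathClass δ := rfl

lemma pathClass_refl (p : X) : pathClass (Path.refl p) = 𝟙 _ := rfl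

lemma pathClass_symm {p q : X} (γ : Path p q) : pathClass γ.symm = inv (pathClass γ) := by
  rw [← Groupoid.inv_eq_inv]
  rfl

lemma pathClass_eq_iff {p q : X} {γ δ : Path p q} :
    pathClass γ = pathClass δ ↔ γ.Homotopic δ :=
  FundamentalGroupoid.fromPath_eq_iff_homotopic γ δ

lemma pathClass_surjective {p q : X} :
    Function.Surjective (pathClass : Path p q → (FundamentalGroupoid.mk p ⟶ .mk q)) :=
  Quotient.exists_rep

lemma pathClass_map {p q : X} (f : C(X, Y)) (γ : Path p q) :
    pathClass (γ.map f.continuous) = (FundamentalGroupoid.map f).map (pathClass γ) := rfl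

lemma pathClass_comp_eq_of_square {p q r s : X} (Q : C(I × I, X))
    (bottom : Path p q) (right : Path q s) (left : Path p r) (top : Path r s)
    (hbottom : ∀ t, Q (t, 0) = bottom t) (hright : ∀ t, Q (1, t) = right t)
    (hleft : ∀ t, Q (0, t) = left t) (htop : ∀ t, Q (t, 1) = top t) :
    pathClass bottom ≫ pathClass right = pathClass left ≫ pathClass top := by
  obtain rfl : Q (0, 0) = p := by simp [hbottom]
  obtain rfl : Q (1, 0) = q := by simp [hbottom]
  obtain rfl : Q (0, 1) = r := by simp [htop]
  obtain rfl : Q (1, 1) = s := by simp [htop]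
  obtain rfl : ((Path.id.prod (.refl 0)).map Q.continuous) = bottom := Path.ext (funext hbottom)
  obtain rfl : (((Path.refl 1).prod .id).map Q.continuous) = right := Path.ext (funext hright)
  obtain rfl : (((Path.refl 0).prod .id).map Q.continuous) = left := Path.ext (funext hleft)
  obtain rfl : ((Path.id.prod (.refl 1)).map Q.continuous) = top := Path.ext (funext htop)
  have : ContractibleSpace I := (convex_Icc (0 : ℝ) 1).contractibleSpace ⟨0, by simp⟩
  simp only [← pathClass_trans, ← Path.map_trans, pathClass_eq_iff]
  exact (SimplyConnectedSpace.paths_homotopic _ _).map Q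

lemma pathClass_subpath_trans {p q : X} (γ : Path p q) (t₀ t₁ t₂ : I) :
    pathClass (γ.subpath t₀ t₁) ≫ pathClass (γ.subpath t₁ t₂) = pathClass (γ.subpath t₀ t₂) :=
  pathClass_eq_iff.2 ⟨Path.Homotopy.subpathTransSubpath γ t₀ t₁ t₂⟩

/-- An arrow of the fundamental groupoid of the ambient space is representable in `N` if some path
in its class stays inside `N`. -/
def RepresentableIn (N : Set X) {p q : X}
    (g : FundamentalGroupoid.mk p ⟶ FundamentalGroupoid.mk q) : Prop :=
  ∃ γ : Path p q, (∀ t, γ t ∈ N) ∧ pathClass γ = g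

namespace RepresentableIn

variable {M N : Set X} {p q r : X}

lemma mono (hMN : M ⊆ N) {g : FundamentalGroupoid.mk p ⟶ .mk q} (hg : RepresentableIn M g) :
    RepresentableIn N g :=
  hg.imp fun _ hγ => ⟨fun t => hMN (hγ.1 t), hγ.2⟩

lemma source_mem {g : FundamentalGroupoid.mk p ⟶ .mk q} (hg : RepresentableIn N g) : p ∈ N := by
  obtain ⟨γ, hγ, -⟩ := hg
  simpa using hγ 0

lemma target_mem {g : FundamentalGroupoid.mk p ⟶ .mk q} (hg : RepresentableIn N g) : q ∈ N := by
  obtain ⟨γ, hγ, -⟩ := hg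
  simpa using hγ 1

lemma pathClass {γ : Path p q} (hγ : ∀ t, γ t ∈ N) : RepresentableIn N (pathClass γ) :=
  ⟨γ, hγ, rfl⟩

lemma id (hp : p ∈ N) : RepresentableIn N (𝟙 (FundamentalGroupoid.mk p)) :=
  ⟨.refl p, fun _ => hp, rfl⟩

lemma comp {g : FundamentalGroupoid.mk p ⟶ .mk q} {h : FundamentalGroupoid.mk q ⟶ .mk r}
    (hg : RepresentableIn N g) (hh : RepresentableIn N h) : RepresentableIn N (g ≫ h) := by
  obtain ⟨γ, hγ, rfl⟩ := hg
  obtain ⟨δ, hδ, rfl⟩ := hh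
  refine ⟨γ.trans δ, fun t => ?_, pathClass_trans γ δ⟩
  have ht : γ.trans δ t ∈ Set.range (γ.trans δ) := Set.mem_range_self t
  rw [Path.trans_range] at ht
  exact ht.elim (fun ⟨s, hs⟩ => hs ▸ hγ s) (fun ⟨s, hs⟩ => hs ▸ hδ s)

lemma inv {g : FundamentalGroupoid.mk p ⟶ .mk q} (hg : RepresentableIn N g) :
    RepresentableIn N (CategoryTheory.inv g) := by
  obtain ⟨γ, hγ, rfl⟩ := hg
  exact ⟨γ.symm, fun t => hγ _, pathClass_symm γ⟩

end RepresentableIn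

/-- Every path with endpoints in `N` can be deformed into `N` relative to its endpoints. For `N`
path connected this says that the fundamental group of `N` surjects onto that of the ambient
space. -/
def PathSurjective (N : Set X) : Prop :=
  ∀ ⦃p q : X⦄, p ∈ N → q ∈ N → ∀ g : FundamentalGroupoid.mk p ⟶ .mk q, RepresentableIn N g

lemma exists_path_of_dense [LocallyPathConnectedSpace X] {D V : Set X} (hD : Dense D)
    (hV : IsOpen V) {x : X} (hx : x ∈ V) : ∃ d ∈ D, ∃ δ : Path x d, ∀ t, δ t ∈ V := by
  obtain ⟨d, hd, hdD⟩ := hD.inter_open_nonempty _ (hV.pathComponentIn x)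
    ⟨x, mem_pathComponentIn_self hx⟩
  exact ⟨d, hdD, hd.somePath, hd.somePath_mem⟩

variable {ι : Type*} {U : ι → Set X}

lemma exists_subdivision (hU : ∀ i, IsOpen (U i)) (hcover : ∀ x, ∃ i, x ∈ U i) {p q : X}
    (γ : Path p q) : ∃ (n : ℕ) (t : ℕ → I) (i : ℕ → ι), t 0 = 0 ∧ t n = 1 ∧
      ∀ k s, γ.subpath (t k) (t (k + 1)) s ∈ U (i k) := by
  obtain ⟨t, ht0, htm, ⟨n, htn⟩, htU⟩ :=
    exists_monotone_Icc_subset_open_cover_unitInterval (c := fun i => γ ⁻¹' U i)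
      (fun i => (hU i).preimage γ.continuous) (fun s _ => by simpa using hcover (γ s))
  choose i hi using htU
  refine ⟨n, t, i, ht0, htn n le_rfl, fun k s => ?_⟩
  obtain ⟨z, hz, hzs⟩ := (γ.range_subpath_of_le _ _ (htm k.le_succ)).subset ⟨s, rfl⟩
  exact hzs ▸ hi k hz

/-- The path is chopped into small pieces, and each cut is corrected by a detour to a point of the
dense set. -/
theorem pathClass_induction [LocallyPathConnectedSpace X] (hU : ∀ i, IsOpen (U i))
    (hcover : ∀ x, ∃ i, x ∈ U i) {D : Set X} (hD : Dense D)
    {P : ∀ ⦃p q : X⦄, (FundamentalGroupoid.mk p ⟶ FundamentalGroupoid.mk q) → Prop}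
    (comp : ∀ ⦃p q r : X⦄ (g : FundamentalGroupoid.mk p ⟶ .mk q)
      (h : FundamentalGroupoid.mk q ⟶ .mk r), p ∈ D → q ∈ D → r ∈ D → P g → P h → P (g ≫ h))
    (small : ∀ i ⦃p q : X⦄ (g : FundamentalGroupoid.mk p ⟶ .mk q), p ∈ D → q ∈ D →
      RepresentableIn (U i) g → P g)
    {p q : X} (hp : p ∈ D) (hq : q ∈ D) (g : FundamentalGroupoid.mk p ⟶ .mk q) : P g := by
  obtain ⟨γ, rfl⟩ := pathClass_surjective g
  obtain ⟨n, t, i, ht0, htn, piece⟩ := exists_subdivision hU hcover γ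
  have left_mem (k : ℕ) : γ (t k) ∈ U (i k) := by simpa using piece k 0
  have right_mem (k : ℕ) : γ (t (k + 1)) ∈ U (i k) := by simpa using piece k 1
  have hp' : γ 0 ∈ D := γ.source.symm ▸ hp
  have key (k : ℕ) : ∃ d ∈ D, ∃ δ : Path (γ (t k)) d, (∀ s, δ s ∈ U (i k)) ∧
      P (pathClass (γ.subpath 0 (t k)) ≫ pathClass δ) := by
    induction k with
    | zero =>
      obtain ⟨d, hd, δ, hδ⟩ := exists_path_of_dense hD (hU (i 0)) (left_mem 0)
      refine ⟨d, hd, δ, hδ, small (i 0) _ hp' hd (.comp (.pathClass fun s => ?_) (.pathClass hδ))⟩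
      rw [ht0, Path.subpath_self]
      simpa [ht0] using left_mem 0
    | succ k ih =>
      obtain ⟨d, hd, δ, hδ, hP⟩ := ih
      obtain ⟨d', hd', δ', hδ'⟩ := exists_path_of_dense hD ((hU (i k)).inter (hU (i (k + 1))))
        ⟨right_mem k, left_mem (k + 1)⟩
      refine ⟨d', hd', δ', fun s => (hδ' s).2, ?_⟩
      have hstep := small (i k) _ hd hd'
        (((RepresentableIn.pathClass hδ).inv.comp (.pathClass (piece k))).comp
          (.pathClass fun s => (hδ' s).1))
      rw [← pathClass_subpath_trans γ 0 (t k)]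
      simpa using comp _ _ hp' hd hd' hP hstep
  obtain ⟨d, hd, δ, hδ, hP⟩ := key n
  have hq' : γ (t n) ∈ D := by rwa [htn, γ.target]
  have hsubpath : P (pathClass (γ.subpath 0 (t n))) := by
    simpa using comp _ _ hp' hd hq' hP (small (i n) _ hd hq' (RepresentableIn.pathClass hδ).inv)
  rw [htn, Path.subpath_zero_one] at hsubpath
  have of_cast : ∀ {p' q' : X} (h₀ : p' = p) (h₁ : q' = q),
      P (pathClass (γ.cast h₀ h₁)) → P (pathClass γ) := by
    rintro p' q' rfl rfl
    exact id
  exact of_cast _ _ hsubpath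

end PathClasses

section PathCocycles

open unitInterval Metric

variable {K : Type*} [Group K]

/-- The ordered product `g z₍ₙ₋₁₎ zₙ * ⋯ * g z₀ z₁` of a two-variable function along a chain. -/
def chainProd {E : Type*} (g : E → E → K) (z : ℕ → E) : ℕ → K
  | 0 => 1
  | n + 1 => g (z n) (z (n + 1)) * chainProd g z n

lemma mul_chainProd_eq_chainProd_mul {E : Type*} [PseudoMetricSpace E] {g : E → E → K} {δ : ℝ}
    {s : Set E} (hg : ∀ u ∈ s, ∀ v ∈ ball u δ, ∀ w ∈ ball u δ, g v w * g u v = g u w)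
    {z w : ℕ → E} {n : ℕ} (hz : ∀ k ≤ n, z k ∈ s)
    (hzz : ∀ k ≤ n, dist (z (k + 1)) (z k) < δ / 2) (hww : ∀ k ≤ n, dist (w (k + 1)) (w k) < δ / 2)
    (hwz : ∀ k ≤ n, dist (w k) (z k) < δ / 2) :
    g (z n) (w n) * chainProd g z n = chainProd g w n * g (z 0) (w 0) := by
  induction n with
  | zero => simp [chainProd]
  | succ n ih =>
    have hn := n.le_succ
    have hδ : 0 < δ := by linarith [dist_nonneg.trans_lt (hwz n hn)]
    have hw : w (n + 1) ∈ ball (z n) δ := by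
      rw [mem_ball]
      linarith [dist_triangle (w (n + 1)) (w n) (z n), hww n hn, hwz n hn]
    rw [chainProd, chainProd, ← mul_assoc,
      hg _ (hz n hn) _ (ball_subset_ball (half_le_self hδ.le) (hzz n hn)) _ hw,
      ← hg _ (hz n hn) _ (ball_subset_ball (half_le_self hδ.le) (hwz n hn)) _ hw, mul_assoc,
      mul_assoc, ih (fun k hk => hz k (hk.trans hn)) (fun k hk => hzz k (hk.trans hn))
        (fun k hk => hww k (hk.trans hn)) (fun k hk => hwz k (hk.trans hn))]

/-- The primitive is the product of the cocycle along a finely subdivided radius. -/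
lemma exists_primitive_of_local_cocycle {E : Type*} [NormedAddCommGroup E] [NormedSpace ℝ E]
    {g : E → E → K} {δ R : ℝ} (hδ : 0 < δ)
    (hg : ∀ u ∈ closedBall 0 R, ∀ v ∈ ball u δ, ∀ w ∈ ball u δ, g v w * g u v = g u w) :
    ∃ ϕ : E → K, ∀ z ∈ closedBall 0 R, ∀ w ∈ closedBall 0 R, dist w z < δ / 2 →
      g z w * ϕ z = ϕ w := by
  obtain ⟨N, hN⟩ := exists_nat_gt (max 0 (2 * R / δ))
  have hN0 : (0 : ℝ) < N := (le_max_left _ _).trans_lt hN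
  have hNR : R / N < δ / 2 := by
    have := (div_lt_iff₀ hδ).1 ((le_max_right _ _).trans_lt hN)
    rw [div_lt_iff₀ hN0]
    linarith
  let radial (z : E) (k : ℕ) : E := ((k : ℝ) / N) • z
  have hle {k : ℕ} (hk : k ≤ N) : (k : ℝ) / N ≤ 1 := (div_le_one hN0).2 (mod_cast hk)
  have hstep {z : E} (hz : z ∈ closedBall 0 R) (k : ℕ) :
      dist (radial z (k + 1)) (radial z k) < δ / 2 := by
    have : radial z (k + 1) - radial z k = (1 / N : ℝ) • z := by
      simp only [radial, ← sub_smul]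
      congr 1
      push_cast
      ring
    rw [dist_eq_norm, this, norm_smul, Real.norm_of_nonneg (by positivity), one_div_mul_eq_div]
    exact (div_le_div_of_nonneg_right (by simpa using hz) hN0.le).trans_lt hNR
  refine ⟨fun z => chainProd g (radial z) N, fun z hz w hw hzw => ?_⟩
  have h0 : g (0 : E) 0 = 1 := by
    have h0R : (0 : E) ∈ closedBall 0 R := by
      simpa using (norm_nonneg z).trans (by simpa using hz)
    simpa using hg 0 h0R 0 (mem_ball_self hδ) 0 (mem_ball_self hδ)
  have := mul_chainProd_eq_chainProd_mul hg (z := radial z) (w := radial w) (n := N)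
    (fun k hk => ?_) (fun k _ => hstep hz k) (fun k _ => hstep hw k) (fun k hk => ?_)
  · simpa [radial, hN0.ne', h0] using this
  · simp only [mem_closedBall_zero_iff, radial, norm_smul] at hz ⊢
    rw [Real.norm_of_nonneg (by positivity)]
    exact (mul_le_of_le_one_left (norm_nonneg z) (hle hk)).trans hz
  · simp only [radial, dist_smul₀]
    rw [Real.norm_of_nonneg (by positivity)]
    exact (mul_le_of_le_one_left dist_nonneg (hle hk)).trans_lt hzw

lemma mul_primitive_eq_of_isPreconnected {E : Type*} [PseudoMetricSpace E] {g : E → E → K}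
    {C : Set E} (hC : IsPreconnected C)
    (hg : ∀ u ∈ C, ∀ v ∈ C, ∀ w ∈ C, g v w * g u v = g u w) {ϕ : E → K} {ε : ℝ} (hε : 0 < ε)
    (hϕ : ∀ z ∈ C, ∀ w ∈ C, dist w z < ε → g z w * ϕ z = ϕ w) {z w : E} (hz : z ∈ C)
    (hw : w ∈ C) : g z w * ϕ z = ϕ w := by
  refine hC.induction₂ (fun z w => g z w * ϕ z = ϕ w) (fun z hz => ?_) ?_ ?_ hz hw
  · filter_upwards [self_mem_nhdsWithin, nhdsWithin_le_nhds (ball_mem_nhds z hε)] with w hw hzw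
    exact hϕ z hz w hw hzw
  · intro u v w hu hv hw huv hvw
    rw [← hg u hu v hv w hw, mul_assoc, huv, hvw]
  · intro u v hu hv huv
    have huu : g u u = 1 := by simpa using hg u hu u hu u hu
    rw [← huv, ← mul_assoc, hg u hu v hv u hu, huu, one_mul]

variable {X : Type*} [TopologicalSpace X]

/-- A function `φ` on paths is a cocycle on `U` if it is trivial on constant paths of `U` and its
holonomy around every continuous square of `U` is trivial; the order of the factors is that of
composition of functions, as for the multiplication of `FundamentalGroup`. In particular `φ` is
invariant under homotopies inside `U`. -/
structure IsPathCocycleOn (φ : C(I, X) → K) (U : Set X) : Prop where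
  const : ∀ x ∈ U, φ (.const I x) = 1
  square : ∀ Q : C(I × I, X), (∀ z, Q z ∈ U) →
    φ (Q.curry 1) * φ ((Q.comp .prodSwap).curry 0) = φ ((Q.comp .prodSwap).curry 1) * φ (Q.curry 0)

namespace IsPathCocycleOn

variable {φ : C(I, X) → K} {U : Set X}

lemma segment_mul {E : Type*} [NormedAddCommGroup E] [NormedSpace ℝ E] (hφ : IsPathCocycleOn φ U)
    (h : C(E, X)) {C : Set E} (hC : Convex ℝ C) (hCU : Set.MapsTo h C U) {u v w : E} (hu : u ∈ C)
    (hv : v ∈ C) (hw : w ∈ C) :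
    φ (h.comp (Path.segment v w)) * φ (h.comp (Path.segment u v)) =
      φ (h.comp (Path.segment u w)) := by
  let Q : C(I × I, X) := h.comp ⟨fun z : I × I =>
    AffineMap.lineMap (AffineMap.lineMap u v (z.1 : ℝ)) w (z.2 : ℝ), by
      simp only [AffineMap.lineMap_apply_module]
      fun_prop⟩
  have hQ := hφ.square Q fun z => hCU (hC.lineMap_mem (hC.lineMap_mem hu hv z.1.2) hw z.2.2)
  have hbottom : (Q.comp .prodSwap).curry 0 = h.comp (Path.segment u v) := by ext; simp [Q]
  have hright : Q.curry 1 = h.comp (Path.segment v w) := by ext; simp [Q]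
  have hleft : Q.curry 0 = h.comp (Path.segment u w) := by ext; simp [Q]
  have htop : (Q.comp .prodSwap).curry 1 = .const I (h w) := by ext; simp [Q]
  rw [hbottom, hright, hleft, htop, hφ.const _ (hCU hw), one_mul] at hQ
  exact hQ

end IsPathCocycleOn

section VanKampen

variable {ι : Type*} {φ : C(I, X) → K} {U : ι → Set X} (hφ : ∀ i, IsPathCocycleOn φ (U i))
  (hU : ∀ i, IsOpen (U i)) (hcover : ∀ x, ∃ i, x ∈ U i)
include hφ hU hcover

lemma exists_primitive_of_isPathCocycleOn {E : Type*} [NormedAddCommGroup E] [NormedSpace ℝ E]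
    [ProperSpace E] (h : C(E, X)) (R : ℝ) :
    ∃ ϕ : E → K, ∀ u ∈ closedBall 0 R, ∀ v ∈ closedBall 0 R,
      (∃ i, ∀ t, h (Path.segment u v t) ∈ U i) → φ (h.comp (Path.segment u v)) * ϕ u = ϕ v := by
  let g (u v : E) : K := φ (h.comp (Path.segment u v))
  obtain ⟨δ, hδ, hball⟩ := lebesgue_number_lemma_of_metric (c := fun i => h ⁻¹' U i)
    (isCompact_closedBall (0 : E) R) (fun i => (hU i).preimage h.continuous)
    fun z _ => by simpa using hcover (h z)
  obtain ⟨ϕ, hϕ⟩ := exists_primitive_of_local_cocycle (g := g) (R := R) hδ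
    fun u hu v hv w hw => by
      obtain ⟨i, hi⟩ := hball u hu
      exact (hφ i).segment_mul h (convex_ball u δ) hi (mem_ball_self hδ) hv hw
  refine ⟨ϕ, fun u hu v hv ⟨i, hi⟩ => ?_⟩
  have hconv := convex_segment (𝕜 := ℝ) u v
  have hsub := (convex_closedBall (0 : E) R).segment_subset hu hv
  have hmaps : Set.MapsTo h (segment ℝ u v) (U i) := by
    rw [← Path.range_segment]
    exact Set.forall_mem_range.2 hi
  exact mul_primitive_eq_of_isPreconnected (g := g) hconv.isPreconnected
    (fun a ha b hb c hc => (hφ i).segment_mul h hconv hmaps ha hb hc) (half_pos hδ)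
    (fun z hz w hw => hϕ z (hsub hz) w (hsub hw)) (left_mem_segment ℝ u v)
    (right_mem_segment ℝ u v)

/-- The van Kampen theorem for cocycles. Pulled back along a homotopy, `φ` becomes a local cocycle
on the square and so has a primitive; it takes equal values at the two ends of the constant sides,
so that the other two sides, which are the given paths, have the same holonomy. -/
theorem eq_of_homotopic_of_isPathCocycleOn {p q : X} {γ γ' : Path p q}
    (hγγ' : γ.Homotopic γ') (hγ : ∃ i, ∀ t, γ t ∈ U i) (hγ' : ∃ i, ∀ t, γ' t ∈ U i) :
    φ γ = φ γ' := by
  obtain ⟨H⟩ := hγγ'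
  let pr : C(ℝ, I) := ⟨Set.projIcc 0 1 zero_le_one, continuous_projIcc⟩
  let h : C(ℝ × ℝ, X) := H.toContinuousMap.comp (pr.prodMap pr)
  obtain ⟨ϕ, hϕ⟩ := exists_primitive_of_isPathCocycleOn hφ hU hcover h 1
  have edge {u v : ℝ × ℝ} {α : C(I, X)} (hu : u ∈ closedBall 0 1) (hv : v ∈ closedBall 0 1)
      (hα : ∀ t, h (Path.segment u v t) = α t) (hαU : ∃ i, ∀ t, α t ∈ U i) :
      φ α * ϕ u = ϕ v := by
    obtain rfl : h.comp (Path.segment u v) = α := ContinuousMap.ext hα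
    exact hϕ u hu v hv hαU
  have const_edge {u v : ℝ × ℝ} {x : X} (hu : u ∈ closedBall 0 1) (hv : v ∈ closedBall 0 1)
      (hx : ∀ t, h (Path.segment u v t) = x) : ϕ u = ϕ v := by
    obtain ⟨i, hi⟩ := hcover x
    simpa [(hφ i).const x hi] using edge (α := .const I x) hu hv hx ⟨i, fun _ => hi⟩
  have hleft : φ γ * ϕ (0, 0) = ϕ (0, 1) :=
    edge (by simp) (by simp) (fun t => by simp [h, pr, AffineMap.lineMap_apply_module]) hγ
  have hright : φ γ' * ϕ (1, 0) = ϕ (1, 1) :=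
    edge (by simp) (by simp) (fun t => by simp [h, pr, AffineMap.lineMap_apply_module]) hγ'
  have hbottom : ϕ (0, 0) = ϕ (1, 0) :=
    const_edge (x := p) (by simp) (by simp) fun t => by
      simp [h, pr, AffineMap.lineMap_apply_module]
  have htop : ϕ (0, 1) = ϕ (1, 1) :=
    const_edge (x := q) (by simp) (by simp) fun t => by
      simp [h, pr, AffineMap.lineMap_apply_module]
  exact mul_right_cancel (hleft.trans (htop.trans (hbottom ▸ hright.symm)))

end VanKampen

end PathCocycles

section Gluing

open unitInterval CategoryTheory

variable {X Y Z K : Type*} [TopologicalSpace X] [TopologicalSpace Y] [TopologicalSpace Z] [Group K]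

lemma exists_comp_eq_of_forall_mem_range {A : Type*} [TopologicalSpace A] {i : C(X, Y)}
    (hi : Topology.IsEmbedding i) (f : C(A, Y)) (hf : ∀ a, f a ∈ Set.range i) :
    ∃ f' : C(A, X), i.comp f' = f := by
  choose f' hf' using hf
  refine ⟨⟨f', hi.continuous_iff.2 ?_⟩, ContinuousMap.ext hf'⟩
  simpa only [Function.comp_def, hf'] using f.continuous

namespace IsPathCocycleOn

lemma range_of_comp {ψ : C(I, X) → K} (hψ : IsPathCocycleOn ψ Set.univ) {i : C(X, Y)}
    (hi : Topology.IsEmbedding i) {φ : C(I, Y) → K} (hφ : ∀ γ, φ (i.comp γ) = ψ γ) :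
    IsPathCocycleOn φ (Set.range i) where
  const := by
    rintro _ ⟨x, rfl⟩
    exact (hφ (.const I x)).trans (hψ.const x trivial)
  square Q hQ := by
    obtain ⟨Q, rfl⟩ := exists_comp_eq_of_forall_mem_range hi Q hQ
    have := hψ.square Q fun _ => trivial
    simp only [← hφ] at this
    exact this

lemma gauge {ψ : C(I, X) → K} (hψ : IsPathCocycleOn ψ Set.univ) (f : C(Z, X)) (κ : Z → K) :
    IsPathCocycleOn (fun δ => (κ (δ 1))⁻¹ * ψ (f.comp δ) * κ (δ 0)) Set.univ where
  const z _ := by simp [hψ.const (f z) trivial]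
  square Q _ := by
    have : ψ (f.comp (Q.curry 1)) * ψ (f.comp ((Q.comp .prodSwap).curry 0)) =
        ψ (f.comp ((Q.comp .prodSwap).curry 1)) * ψ (f.comp (Q.curry 0)) :=
      hψ.square (f.comp Q) fun _ => trivial
    simp only [mul_assoc, ContinuousMap.curry_apply, ContinuousMap.comp_apply,
      ContinuousMap.prodSwap_apply, mul_inv_cancel_left, mul_left_cancel_iff]
    simp only [← mul_assoc, this]

end IsPathCocycleOn

theorem eq_of_homotopic_of_compatible {i : C(X, Y)} {e : C(Z, Y)} (hi : Topology.IsOpenEmbedding i)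
    (he : Topology.IsOpenEmbedding e) (hcover : Set.range i ∪ Set.range e = Set.univ)
    {ψ : C(I, X) → K} {χ : C(I, Z) → K} (hψ : IsPathCocycleOn ψ Set.univ)
    (hχ : IsPathCocycleOn χ Set.univ) (hψχ : ∀ γ δ, i.comp γ = e.comp δ → ψ γ = χ δ)
    {p q : X} {γ γ' : Path p q}
    (h : (γ.map i.continuous).Homotopic (γ'.map i.continuous)) : ψ γ = ψ γ' := by
  let φ : C(I, Y) → K := Function.extend i.comp ψ (Function.extend e.comp χ 1)
  have hφψ (α : C(I, X)) : φ (i.comp α) = ψ α :=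
    Function.Injective.extend_apply (fun _ _ => (ContinuousMap.cancel_left hi.injective).1) _ _ α
  have hφχ (β : C(I, Z)) : φ (e.comp β) = χ β := by
    by_cases hβ : ∃ α : C(I, X), i.comp α = e.comp β
    · obtain ⟨α, hα⟩ := hβ
      rw [← hα, hφψ, hψχ α β hα]
    · exact (Function.extend_apply' _ _ _ hβ).trans <| Function.Injective.extend_apply
        (fun _ _ => (ContinuousMap.cancel_left he.injective).1) _ _ β
  let U (b : Bool) : Set Y := bif b then Set.range i else Set.range e
  have hφU : ∀ b, IsPathCocycleOn φ (U b) := Bool.forall_bool.2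
    ⟨hχ.range_of_comp he.isEmbedding hφχ, hψ.range_of_comp hi.isEmbedding hφψ⟩
  have hU : ∀ b, IsOpen (U b) := Bool.forall_bool.2 ⟨he.isOpen_range, hi.isOpen_range⟩
  have hcover' (y : Y) : ∃ b, y ∈ U b := by
    rw [Bool.exists_bool, or_comm]
    exact hcover.symm.subset (Set.mem_univ y)
  rw [← hφψ, ← hφψ]
  exact eq_of_homotopic_of_isPathCocycleOn hφU hU hcover' h
    ⟨true, fun t => Set.mem_range_self _⟩ ⟨true, fun t => Set.mem_range_self _⟩

end Gluing

section Holonomy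

open unitInterval CategoryTheory

variable {X K : Type*} [TopologicalSpace X] [Group K] {p : X}

/-- The loop at `p` obtained from the path `γ` by joining its endpoints to `p` along the chosen
paths `c`. -/
noncomputable def basedLoop (c : ∀ x : X, FundamentalGroupoid.mk p ⟶ .mk x) (γ : C(I, X)) :
    FundamentalGroup X p :=
  c (γ 0) ≫ pathClass (⟨γ, rfl, rfl⟩ : Path (γ 0) (γ 1)) ≫ inv (c (γ 1))

lemma basedLoop_coe (c : ∀ x : X, FundamentalGroupoid.mk p ⟶ .mk x) {x y : X} (γ : Path x y) :
    basedLoop c γ = c x ≫ pathClass γ ≫ inv (c y) := by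
  obtain ⟨γ, rfl, rfl⟩ := γ
  rfl

lemma basedLoop_refl (c : ∀ x : X, FundamentalGroupoid.mk p ⟶ .mk x) (x : X) :
    basedLoop c (Path.refl x) = 1 := by
  rw [basedLoop_coe, pathClass_refl, Category.id_comp, IsIso.hom_inv_id]
  rfl

lemma isPathCocycleOn_basedLoop (c : ∀ x : X, FundamentalGroupoid.mk p ⟶ .mk x)
    (f : FundamentalGroup X p →* K) :
    IsPathCocycleOn (fun γ => f (basedLoop c γ)) Set.univ where
  const x _ := (congrArg f (basedLoop_refl c x)).trans (map_one f)
  square Q _ := by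
    let right : Path (Q (1, 0)) (Q (1, 1)) := ⟨Q.curry 1, rfl, rfl⟩
    let bottom : Path (Q (0, 0)) (Q (1, 0)) := ⟨(Q.comp .prodSwap).curry 0, rfl, rfl⟩
    let top : Path (Q (0, 1)) (Q (1, 1)) := ⟨(Q.comp .prodSwap).curry 1, rfl, rfl⟩
    let left : Path (Q (0, 0)) (Q (0, 1)) := ⟨Q.curry 0, rfl, rfl⟩
    have hsquare : pathClass bottom ≫ pathClass right = pathClass left ≫ pathClass top :=
      pathClass_comp_eq_of_square Q bottom right left top (fun _ => rfl) (fun _ => rfl)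
        (fun _ => rfl) (fun _ => rfl)
    rw [← map_mul, ← map_mul]
    congr 1
    change basedLoop c bottom ≫ basedLoop c right = basedLoop c left ≫ basedLoop c top
    simp only [basedLoop_coe, Category.assoc, IsIso.inv_hom_id_assoc, reassoc_of% hsquare]

end Holonomy

section PuncturedTube

open unitInterval CategoryTheory Topology

variable {X Y F : Type*} [TopologicalSpace X] [TopologicalSpace Y] [TopologicalSpace F]

/-- The open embedding `i` is the inclusion of the complement of a hypersurface, `e` is a
trivialised tubular neighbourhood `F × ℂ` of that hypersurface, the latter being `F × {0}`, and `q`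
is the universal covering in the second coordinate of the punctured tube. -/
structure IsPuncturedTube (i : C(X, Y)) (e : C(F × ℂ, Y)) (q : C(F × ℂ, X)) : Prop where
  isOpenEmbedding_complement : IsOpenEmbedding i
  isOpenEmbedding_tube : IsOpenEmbedding e
  apply_exp : ∀ x w, i (q (x, w)) = e (x, Complex.exp w)
  apply_zero_notMem : ∀ x, e (x, 0) ∉ Set.range i
  cover : Set.range i ∪ Set.range e = Set.univ

lemma exists_log_lift (γ : C(I, ℂ)) (hγ : ∀ t, γ t ≠ 0) :
    ∃ ω : C(I, ℂ), ∀ t, Complex.exp (ω t) = γ t := by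
  let γ' : C(I, {z : ℂ // z ≠ 0}) := ⟨fun t => ⟨γ t, hγ t⟩, by fun_prop⟩
  obtain ⟨ω, hω, -⟩ := Complex.isCoveringMap_exp.exists_path_lifts γ' (Complex.log (γ 0))
    (Subtype.ext (Complex.exp_log (hγ 0)).symm)
  exact ⟨ω, fun t => congrArg Subtype.val (congrFun hω t)⟩

lemma exists_path_ne_zero {z w : ℂ} (hz : z ≠ 0) (hw : w ≠ 0) :
    ∃ γ : Path z w, ∀ t, γ t ≠ 0 := by
  obtain ⟨γ, hγ⟩ := (isPathConnected_compl_singleton_of_one_lt_rank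
    (Complex.rank_real_complex ▸ Cardinal.one_lt_two) (0 : ℂ)).joinedIn z hz w hw
  exact ⟨γ, hγ⟩

lemma exp_segment (w v : ℂ) (t : I) :
    Complex.exp (Path.segment w (w + v) t) = Complex.exp w * Complex.exp (t * v) := by
  rw [← Complex.exp_add]
  simp [AffineMap.lineMap_apply, add_comm]

namespace IsPuncturedTube

variable {i : C(X, Y)} {e : C(F × ℂ, Y)} {q : C(F × ℂ, X)} (h : IsPuncturedTube i e q)
include h

lemma tube_mem_range_iff {z : F × ℂ} : e z ∈ Set.range i ↔ z.2 ≠ 0 := by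
  refine ⟨?_, fun hz => ⟨q (z.1, Complex.log z.2), by rw [h.apply_exp, Complex.exp_log hz]⟩⟩
  rintro hz hz0
  exact h.apply_zero_notMem z.1 (by rwa [← hz0])

lemma covering_eq_iff {z z' : F × ℂ} :
    q z = q z' ↔ z.1 = z'.1 ∧ Complex.exp z.2 = Complex.exp z'.2 := by
  rw [← h.isOpenEmbedding_complement.injective.eq_iff, h.apply_exp z.1 z.2, h.apply_exp z'.1 z'.2,
    h.isOpenEmbedding_tube.injective.eq_iff, Prod.mk_inj]

lemma exists_lift {γ : C(I, X)} {δ : C(I, F × ℂ)} (hγδ : i.comp γ = e.comp δ) :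
    ∃ ω : C(I, F × ℂ), q.comp ω = γ ∧ ∀ t, (ω t).1 = (δ t).1 ∧ Complex.exp (ω t).2 = (δ t).2 := by
  obtain ⟨ω, hω⟩ := exists_log_lift (.comp .snd δ) fun t =>
    h.tube_mem_range_iff.1 ⟨γ t, DFunLike.congr_fun hγδ t⟩
  refine ⟨.prodMk (.comp .fst δ) ω, ?_, fun t => ⟨rfl, hω t⟩⟩
  rw [← ContinuousMap.cancel_left h.isOpenEmbedding_complement.injective, hγδ]
  ext t
  exact (h.apply_exp _ _).trans (by rw [hω]; rfl)

lemma range_covering : Set.range q = i ⁻¹' Set.range e := by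
  refine Set.Subset.antisymm (Set.range_subset_iff.2 fun z => ⟨_, (h.apply_exp z.1 z.2).symm⟩) ?_
  rintro p ⟨z, hz⟩
  have hz0 : z.2 ≠ 0 := h.tube_mem_range_iff.1 ⟨p, hz.symm⟩
  refine ⟨(z.1, Complex.log z.2), h.isOpenEmbedding_complement.injective ?_⟩
  rw [h.apply_exp, Complex.exp_log hz0, ← hz]

/-- The loop at `q z` going once around the hypersurface. -/
noncomputable def meridian (z : F × ℂ) : Path (q z) (q z) :=
  ((Path.segment z.2 (z.2 + 2 * Real.pi * Complex.I)).map (q.curry z.1).continuous).cast rfl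
    (h.covering_eq_iff.2 ⟨rfl, (Complex.exp_periodic z.2).symm⟩)

lemma meridian_comm {z z' : F × ℂ} {g : FundamentalGroupoid.mk (q z) ⟶ .mk (q z')}
    (hg : RepresentableIn (Set.range q) g) :
    g ≫ pathClass (h.meridian z') = pathClass (h.meridian z) ≫ g := by
  obtain ⟨γ, hγ, rfl⟩ := hg
  obtain ⟨δ, hδ⟩ := exists_comp_eq_of_forall_mem_range h.isOpenEmbedding_tube.isEmbedding
    (i.comp γ.toContinuousMap) fun t => h.range_covering.subset (hγ t)
  obtain ⟨ω, hω, -⟩ := h.exists_lift hδ.symm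
  have hωγ (t : I) : q (ω t) = γ t := DFunLike.congr_fun hω t
  have hz := h.covering_eq_iff.1 ((hωγ 0).trans γ.source)
  have hz' := h.covering_eq_iff.1 ((hωγ 1).trans γ.target)
  refine pathClass_comp_eq_of_square
    (q.comp ⟨fun t => ((ω t.1).1, (ω t.1).2 + (t.2 : ℝ) * (2 * Real.pi * Complex.I)), by fun_prop⟩)
    _ _ _ _ (fun t => ?_) (fun t => ?_) (fun t => ?_) (fun t => ?_)
  · simp [hωγ]
  · exact h.covering_eq_iff.2 ⟨hz'.1, by rw [exp_segment, ← hz'.2, ← Complex.exp_add]; rfl⟩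
  · exact h.covering_eq_iff.2 ⟨hz.1, by rw [exp_segment, ← hz.2, ← Complex.exp_add]; rfl⟩
  · rw [← hωγ]
    exact h.covering_eq_iff.2 ⟨rfl, by simp [Complex.exp_add]⟩

lemma dense_range_complement : Dense (Set.range i) := by
  intro y
  obtain ⟨x, rfl⟩ | ⟨⟨x, ζ⟩, rfl⟩ := h.cover.symm.subset (Set.mem_univ y)
  · exact subset_closure ⟨x, rfl⟩
  · exact map_mem_closure (f := fun ζ => e (x, ζ)) (by fun_prop) (dense_compl_singleton 0 ζ)
      fun ζ hζ => h.tube_mem_range_iff.2 hζ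

lemma representableIn_range_complement {y y' : Y} (hy : y ∈ Set.range i) (hy' : y' ∈ Set.range i)
    {g : FundamentalGroupoid.mk y ⟶ .mk y'} (hg : RepresentableIn (Set.range e) g) :
    RepresentableIn (Set.range i) g := by
  obtain ⟨δ, hδ, rfl⟩ := hg
  obtain ⟨β, hβ⟩ := exists_comp_eq_of_forall_mem_range h.isOpenEmbedding_tube.isEmbedding
    δ.toContinuousMap hδ
  have hβδ (t : I) : e (β t) = δ t := DFunLike.congr_fun hβ t
  obtain rfl : e (β 0) = y := (hβδ 0).trans δ.source
  obtain rfl : e (β 1) = y' := (hβδ 1).trans δ.target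
  let ξ : Path (β 0).1 (β 1).1 := ⟨.comp .fst β, rfl, rfl⟩
  let ζ : Path (β 0).2 (β 1).2 := ⟨.comp .snd β, rfl, rfl⟩
  obtain ⟨ζ', hζ'⟩ := exists_path_ne_zero (h.tube_mem_range_iff.1 hy) (h.tube_mem_range_iff.1 hy')
  obtain rfl : (ξ.prod ζ).map e.continuous = δ := Path.ext (funext hβδ)
  refine ⟨(ξ.prod ζ').map e.continuous, fun t => h.tube_mem_range_iff.2 (hζ' t), ?_⟩
  obtain ⟨H⟩ := SimplyConnectedSpace.paths_homotopic ζ' ζ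
  exact pathClass_eq_iff.2 (Path.Homotopic.map ⟨Path.Homotopic.prodHomotopy (.refl ξ) H⟩ e)

theorem pathSurjective_range_complement [LocallyPathConnectedSpace Y] :
    PathSurjective (Set.range i) := by
  intro y y' hy hy' g
  let U (b : Bool) : Set Y := bif b then Set.range i else Set.range e
  have hU : ∀ b, IsOpen (U b) := Bool.forall_bool.2
    ⟨h.isOpenEmbedding_tube.isOpen_range, h.isOpenEmbedding_complement.isOpen_range⟩
  have hcover (y : Y) : ∃ b, y ∈ U b := by
    rw [Bool.exists_bool, or_comm]
    exact h.cover.symm.subset (Set.mem_univ y)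
  refine pathClass_induction hU hcover h.dense_range_complement
    (fun _ _ _ _ _ _ _ _ => RepresentableIn.comp)
    (Bool.forall_bool.2 ⟨fun _ _ _ hy hy' => h.representableIn_range_complement hy hy',
      fun _ _ _ _ _ hg => hg⟩) hy hy' g

theorem map_complement_surjective [LocallyPathConnectedSpace Y] (p : X) :
    Function.Surjective (FundamentalGroup.map i p) := by
  intro g
  obtain ⟨γ, hγ, hg⟩ := h.pathSurjective_range_complement ⟨p, rfl⟩ ⟨p, rfl⟩ g
  obtain ⟨γ', hγ'⟩ := exists_comp_eq_of_forall_mem_range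
    h.isOpenEmbedding_complement.isEmbedding γ.toContinuousMap hγ
  have hγγ' (t : I) : i (γ' t) = γ t := DFunLike.congr_fun hγ' t
  let δ : Path p p := ⟨γ', h.isOpenEmbedding_complement.injective ((hγγ' 0).trans γ.source),
    h.isOpenEmbedding_complement.injective ((hγγ' 1).trans γ.target)⟩
  have hδ : δ.map i.continuous = γ := Path.ext (funext hγγ')
  exact ⟨pathClass δ, (congrArg pathClass hδ).trans hg⟩

lemma map_complement_meridian (z : F × ℂ) :
    FundamentalGroup.map i (q z) (pathClass (h.meridian z)) = 1 := by
  let ζ : C(I, ℂ) :=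
    ⟨fun t => Complex.exp (Path.segment z.2 (z.2 + 2 * Real.pi * Complex.I) t), by fun_prop⟩
  have hz : i (q z) = e (z.1, Complex.exp z.2) := h.apply_exp z.1 z.2
  have hζ : ζ 1 = Complex.exp z.2 := by simpa [ζ] using Complex.exp_periodic z.2
  have hsquare := pathClass_comp_eq_of_square
    (e.comp ⟨fun t => (z.1, (1 - (t.2 : ℝ)) * ζ t.1 + (t.2 : ℝ) * Complex.exp z.2), by fun_prop⟩)
    ((h.meridian z).map i.continuous) (.refl _) (.refl _) (.refl _)
    (fun t => ?_) (fun t => ?_) (fun t => ?_) (fun t => ?_)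
  · rw [pathClass_refl, Category.comp_id, Category.comp_id] at hsquare
    exact hsquare
  · exact (congrArg (fun w => e (z.1, w)) (by simp [ζ])).trans (h.apply_exp z.1 _).symm
  · simp [hζ, hz, ← add_mul]
  · simp [ζ, hz, ← add_mul]
  · simp [hz]

end IsPuncturedTube

end PuncturedTube

section Kernel

open unitInterval CategoryTheory

variable {X Y F K : Type*} [TopologicalSpace X] [TopologicalSpace Y] [TopologicalSpace F] [Group K]

/-- The value of `ψ` on the path contracting the fibre coordinate `w` of `q (x, w)` to `0`. -/
noncomputable def fibreHolonomy (ψ : C(I, X) → K) (q : C(F × ℂ, X)) (z : F × ℂ) : K :=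
  ψ ((q.curry z.1).comp (Path.segment z.2 0))

lemma fibreHolonomy_mul {ψ : C(I, X) → K} (hψ : IsPathCocycleOn ψ Set.univ) (q : C(F × ℂ, X))
    (ω : C(I, F × ℂ)) :
    fibreHolonomy ψ q (ω 1) * ψ (q.comp ω) =
      ψ (q.comp (.prodMk (.comp .fst ω) 0)) * fibreHolonomy ψ q (ω 0) := by
  let Q : C(I × I, X) :=
    q.comp ⟨fun t => ((ω t.1).1, AffineMap.lineMap (ω t.1).2 (0 : ℂ) (t.2 : ℝ)), by
      simp only [AffineMap.lineMap_apply_module]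
      fun_prop⟩
  have hQ := hψ.square Q fun _ => trivial
  have hbottom : (Q.comp .prodSwap).curry 0 = q.comp ω := by ext; simp [Q]
  have htop : (Q.comp .prodSwap).curry 1 = q.comp (.prodMk (.comp .fst ω) 0) := by ext; simp [Q]
  rwa [hbottom, htop] at hQ

namespace IsPuncturedTube

variable {i : C(X, Y)} {e : C(F × ℂ, Y)} {q : C(F × ℂ, X)} (h : IsPuncturedTube i e q)
  {ψ : C(I, X) → K} (hψ : IsPathCocycleOn ψ Set.univ)
  (hmeridian : ∀ z, ψ (h.meridian z) = 1)
include h hψ hmeridian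

lemma fibreHolonomy_periodic (x : F) :
    Function.Periodic (fun w => fibreHolonomy ψ q (x, w)) (2 * Real.pi * Complex.I) := by
  intro w
  have := hψ.segment_mul (q.curry x) convex_univ (Set.mapsTo_univ _ _) (Set.mem_univ w)
    (Set.mem_univ (w + 2 * Real.pi * Complex.I)) (Set.mem_univ 0)
  have hloop : ψ ((q.curry x).comp (Path.segment w (w + 2 * Real.pi * Complex.I))) = 1 :=
    hmeridian (x, w)
  rwa [hloop, mul_one] at this

lemma fibreHolonomy_log_exp (x : F) (w : ℂ) :
    fibreHolonomy ψ q (x, Complex.log (Complex.exp w)) = fibreHolonomy ψ q (x, w) := by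
  obtain ⟨n, hn⟩ := Complex.exp_eq_exp_iff_exists_int.1 (Complex.exp_log (Complex.exp_ne_zero w))
  rw [hn]
  exact (h.fibreHolonomy_periodic hψ hmeridian x).int_mul n w

/-- Contracting the fibres of the tube turns `ψ` into a cocycle on the whole tube, well defined
because the meridians, which obstruct the contraction, are killed by `ψ`. -/
theorem eq_of_homotopic_complement {p p' : X} {γ γ' : Path p p'}
    (hγ : (γ.map i.continuous).Homotopic (γ'.map i.continuous)) : ψ γ = ψ γ' := by
  refine eq_of_homotopic_of_compatible h.isOpenEmbedding_complement h.isOpenEmbedding_tube h.cover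
    hψ (hψ.gauge (q.comp (.prodMk .fst 0))
      fun z : F × ℂ => fibreHolonomy ψ q (z.1, Complex.log z.2)) (fun α δ hαδ => ?_) hγ
  obtain ⟨ω, rfl, hω⟩ := h.exists_lift hαδ
  have hκ (t : I) :
      fibreHolonomy ψ q ((δ t).1, Complex.log (δ t).2) = fibreHolonomy ψ q (ω t) := by
    rw [← (hω t).1, ← (hω t).2, h.fibreHolonomy_log_exp hψ hmeridian]
  have hfst : (ContinuousMap.prodMk .fst 0 : C(F × ℂ, F × ℂ)).comp δ = .prodMk (.comp .fst ω) 0 :=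
    ContinuousMap.ext fun t => Prod.ext (hω t).1.symm rfl
  rw [hκ, hκ, ContinuousMap.comp_assoc, hfst, mul_assoc, ← fibreHolonomy_mul hψ,
    inv_mul_cancel_left]

omit hψ hmeridian ψ in
theorem ker_map_complement_le [PathConnectedSpace X] {p : X} (N : Subgroup (FundamentalGroup X p))
    [N.Normal] (hN : ∀ z (c : FundamentalGroupoid.mk p ⟶ .mk (q z)),
      (c ≫ pathClass (h.meridian z) ≫ inv c : FundamentalGroup X p) ∈ N) :
    (FundamentalGroup.map i p).ker ≤ N := by
  intro g hg
  obtain ⟨γ, hγg⟩ := pathClass_surjective g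
  have hγ : (γ.map i.continuous).Homotopic ((Path.refl p).map i.continuous) := by
    rw [← pathClass_eq_iff, pathClass_map, hγg]
    exact hg
  let c (x : X) : FundamentalGroupoid.mk p ⟶ .mk x := pathClass (PathConnectedSpace.somePath p x)
  have hψ := h.eq_of_homotopic_complement (isPathCocycleOn_basedLoop c (QuotientGroup.mk' N))
    (fun z => by
      rw [basedLoop_coe]
      exact (QuotientGroup.eq_one_iff _).2 (hN z _)) hγ
  let a : FundamentalGroup X p := c p
  have hconj : basedLoop c γ = a⁻¹ * g * a := by
    rw [basedLoop_coe, ← Groupoid.inv_eq_inv, hγg]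
    rfl
  rw [hconj, basedLoop_refl, map_one, QuotientGroup.mk'_apply, QuotientGroup.eq_one_iff] at hψ
  simpa only [mul_assoc, mul_inv_cancel_left, mul_inv_cancel, mul_one] using
    ‹N.Normal›.conj_mem _ hψ a

end IsPuncturedTube

end Kernel

section Winding

open CategoryTheory unitInterval

lemma exists_windingHom {x : {z : ℂ // z ≠ 0}} {w : ℂ} (hw : Complex.exp w = x) :
    ∃ d : FundamentalGroup {z : ℂ // z ≠ 0} x →* Multiplicative ℤ,
      ∀ (n : ℤ) (ω : Path w (w + n * (2 * Real.pi * Complex.I))) (γ : Path x x),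
        (∀ t, Complex.exp (ω t) = γ t) → d (pathClass γ) = Multiplicative.ofAdd n := by
  let cov := Complex.isAddQuotientCoveringMap_exp
  let G := AddSubgroup.zmultiples (2 * Real.pi * Complex.I)
  let g : G := ⟨2 * Real.pi * Complex.I, AddSubgroup.mem_zmultiples _⟩
  have hg : AddSubgroup.zmultiples g = ⊤ := by
    exact (AddSubgroup.eq_top_iff' _).2 fun ⟨_, k, hk⟩ => ⟨k, Subtype.ext hk⟩
  have : Infinite G :=
    Set.infinite_coe_iff.2
      (infinite_zmultiples.2 (not_isOfFinAddOrder_of_isAddTorsionFree (by simp)))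
  let lift : (fun z : ℂ => (⟨_, z.exp_ne_zero⟩ : {z : ℂ // z ≠ 0})) ⁻¹' {x} := ⟨w, Subtype.ext hw⟩
  let D : (Multiplicative G)ᵐᵒᵖ ≃* Multiplicative ℤ :=
    MulOpposite.opMulEquiv.symm.trans
      (AddEquiv.toMultiplicative (intEquivOfZMultiplesEqTop g hg).symm)
  refine ⟨D.toMonoidHom.comp (cov.fundamentalGroupToMulOpposite lift), fun n ω γ hωγ => ?_⟩
  have : cov.fundamentalGroupToMulOpposite lift (pathClass γ) =
      MulOpposite.op (Multiplicative.ofAdd (n • g)) := by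
    rw [cov.fundamentalGroupToMulOpposite_apply_eq_Iff]
    have := (cov.isCoveringMap.eq_liftPath_iff' (γ := (γ : C(I, {z : ℂ // z ≠ 0}))) (e := w)
      (γ.source.trans (Subtype.ext hw.symm)) (Γ := ω)).2
      ⟨funext fun t => Subtype.ext (hωγ t), ω.source⟩
    have hend : (cov.isCoveringMap.monodromy (pathClass γ) lift).1 = ω 1 :=
      (DFunLike.congr_fun this 1).symm
    rw [hend, ω.target, add_comm]
    change ((n • g : G) : ℂ) + w = _
    simp [g, zsmul_eq_mul]
  rw [MonoidHom.comp_apply, this]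
  have : (intEquivOfZMultiplesEqTop g hg).symm (n • g) = n := by simp
  exact congrArg Multiplicative.ofAdd this

lemma nonempty_mulEquiv_prod_of_ker_le_zpowers {G H : Type*} [Group G] [Group H] {f : G →* H}
    (hf : Function.Surjective f) {t : G} (ht : f t = 1) (hker : f.ker ≤ Subgroup.zpowers t)
    {d : G →* Multiplicative ℤ} (hd : d t = Multiplicative.ofAdd 1) :
    Nonempty (G ≃* H × Multiplicative ℤ) := by
  have hdt (k : Multiplicative ℤ) : d (t ^ k.toAdd) = k := by
    rw [map_zpow, hd, ← Int.ofAdd_mul, one_mul]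
    rfl
  refine ⟨MulEquiv.ofBijective (f.prod d) ⟨?_, fun ⟨x, k⟩ => ?_⟩⟩
  · refine (injective_iff_map_eq_one _).2 fun g hg => ?_
    obtain ⟨hfg, hdg⟩ := Prod.mk_eq_one.1 hg
    obtain ⟨n, rfl⟩ := hker hfg
    have hn := hdt (.ofAdd n)
    rw [toAdd_ofAdd, hdg] at hn
    simp [← Multiplicative.ofAdd.injective hn]
  · obtain ⟨g, rfl⟩ := hf x
    refine ⟨g * t ^ ((d g)⁻¹ * k).toAdd, Prod.ext ?_ ?_⟩
    · simp [map_zpow, ht]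
    · exact (map_mul d _ _).trans (by rw [hdt, mul_inv_cancel_left])

end Winding

section Splitting

open CategoryTheory Topology

variable {X Y F : Type*} [TopologicalSpace X] [TopologicalSpace Y] [TopologicalSpace F]

/-- Since the loops at the base point can be pushed into the punctured tube, the meridian is
central and all meridians are conjugate to it. -/
theorem IsPuncturedTube.nonempty_mulEquiv_prod [PathConnectedSpace X] [LocallyPathConnectedSpace Y]
    {i : C(X, Y)} {e : C(F × ℂ, Y)} {q : C(F × ℂ, X)} (h : IsPuncturedTube i e q)
    (hq : PathSurjective (Set.range q)) (z : F × ℂ)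
    {d : FundamentalGroup X (q z) →* Multiplicative ℤ}
    (hd : d (pathClass (h.meridian z)) = Multiplicative.ofAdd 1) :
    Nonempty (FundamentalGroup X (q z) ≃*
      FundamentalGroup Y (i (q z)) × Multiplicative ℤ) := by
  let t : FundamentalGroup X (q z) := pathClass (h.meridian z)
  have comm {z' : F × ℂ} (g : FundamentalGroupoid.mk (q z) ⟶ .mk (q z')) :
      g ≫ pathClass (h.meridian z') = pathClass (h.meridian z) ≫ g :=
    h.meridian_comm (hq ⟨z, rfl⟩ ⟨z', rfl⟩ g)
  have normal : (Subgroup.zpowers t).Normal := by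
    refine ⟨fun s hs g => ?_⟩
    obtain ⟨n, rfl⟩ := Subgroup.mem_zpowers_iff.1 hs
    have htg : Commute t g := comm g
    rwa [← (htg.zpow_left n).eq, mul_inv_cancel_right]
  refine nonempty_mulEquiv_prod_of_ker_le_zpowers (h.map_complement_surjective (q z))
    (h.map_complement_meridian z) (h.ker_map_complement_le (Subgroup.zpowers t) fun z' c => ?_) hd
  rw [reassoc_of% comm c, IsIso.hom_inv_id, Category.comp_id]
  exact Subgroup.mem_zpowers t

end Splitting

section Compression

open CategoryTheory

variable {X : Type*} [TopologicalSpace X] {N D : Set X} {p q r : X}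

/-- An arrow between points of `D` is compressible into `N` if prolonging it inside `D` to points of
`N` always makes it representable in `N`. -/
def CompressibleInto (N D : Set X) (g : FundamentalGroupoid.mk p ⟶ .mk q) : Prop :=
  ∀ ⦃p' q' : X⦄ (c : FundamentalGroupoid.mk p' ⟶ .mk p) (c' : FundamentalGroupoid.mk q ⟶ .mk q'),
    p' ∈ N → q' ∈ N → RepresentableIn D c → RepresentableIn D c' → RepresentableIn N (c ≫ g ≫ c')

lemma RepresentableIn.compressibleInto
    (hDN : ∀ ⦃p q : X⦄ (g : FundamentalGroupoid.mk p ⟶ .mk q), p ∈ N → q ∈ N →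
      RepresentableIn D g → RepresentableIn N g)
    {g : FundamentalGroupoid.mk p ⟶ .mk q} (hg : RepresentableIn D g) : CompressibleInto N D g :=
  fun _ _ _ _ hp hq hc hc' => hDN _ hp hq (hc.comp (hg.comp hc'))

lemma RepresentableIn.compressibleInto_of_endpoints
    (hDN : ∀ ⦃p q : X⦄ (g : FundamentalGroupoid.mk p ⟶ .mk q), p ∈ N → q ∈ N →
      RepresentableIn D g → RepresentableIn N g)
    (hp : p ∈ N) (hq : q ∈ N) {g : FundamentalGroupoid.mk p ⟶ .mk q} (hg : RepresentableIn N g) :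
    CompressibleInto N D g :=
  fun _ _ _ _ hp' hq' hc hc' => (hDN _ hp' hp hc).comp (hg.comp (hDN _ hq hq' hc'))

lemma CompressibleInto.inv {g : FundamentalGroupoid.mk p ⟶ .mk q} (hg : CompressibleInto N D g) :
    CompressibleInto N D (CategoryTheory.inv g) := by
  intro q' p' c c' hq' hp' hc hc'
  simpa using (hg (CategoryTheory.inv c') (CategoryTheory.inv c) hp' hq' hc'.inv hc.inv).inv

lemma CompressibleInto.comp
    (hretract : ∀ x ∈ D, ∃ x' ∈ N, ∃ c : FundamentalGroupoid.mk x ⟶ .mk x', RepresentableIn D c)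
    (hq : q ∈ D) {g : FundamentalGroupoid.mk p ⟶ .mk q} {h : FundamentalGroupoid.mk q ⟶ .mk r}
    (hg : CompressibleInto N D g) (hh : CompressibleInto N D h) : CompressibleInto N D (g ≫ h) := by
  intro p' r' c c' hp' hr' hc hc'
  obtain ⟨q', hq', d, hd⟩ := hretract q hq
  simpa using (hg c d hp' hq' hc hd).comp (hh (CategoryTheory.inv d) c' hq' hr' hd.inv hc')

theorem pathSurjective_of_compressible [LocallyPathConnectedSpace X] (hN : IsOpen N) (hD : Dense D)
    (hretract : ∀ x ∈ D, ∃ x' ∈ N, ∃ c : FundamentalGroupoid.mk x ⟶ .mk x', RepresentableIn D c)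
    (hsmall : ∀ x, ∃ U, IsOpen U ∧ x ∈ U ∧
      ∀ ⦃p q : X⦄ (g : FundamentalGroupoid.mk p ⟶ .mk q), p ∈ D → q ∈ D →
        RepresentableIn U g → CompressibleInto N D g) :
    PathSurjective N := by
  intro p q hp hq g
  choose U hU hxU hcomp using hsmall
  obtain ⟨p', hp', δ, hδ⟩ := exists_path_of_dense hD hN hp
  obtain ⟨q', hq', δ', hδ'⟩ := exists_path_of_dense hD hN hq
  have hmid : CompressibleInto N D (inv (pathClass δ) ≫ g ≫ pathClass δ') :=
    pathClass_induction hU (fun x => ⟨x, hxU x⟩) hD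
      (fun _ _ _ _ _ _ hq _ => CompressibleInto.comp hretract hq) hcomp hp' hq' _
  have hN' := hmid _ _ (by simpa using hδ 1) (by simpa using hδ' 1) (.id hp') (.id hq')
  simpa using (RepresentableIn.pathClass hδ).comp (hN'.comp (RepresentableIn.pathClass hδ').inv)

lemma pathConnectedSpace_of_dense_of_retract [LocallyPathConnectedSpace X] (hD : Dense D)
    (hN : IsPathConnected N)
    (hretract : ∀ x ∈ D, ∃ x' ∈ N, ∃ c : FundamentalGroupoid.mk x ⟶ .mk x', RepresentableIn D c) :
    PathConnectedSpace X := by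
  have hjoined (x : X) : ∃ x' ∈ N, Joined x x' := by
    obtain ⟨d, hd, δ, -⟩ := exists_path_of_dense hD isOpen_univ (Set.mem_univ x)
    obtain ⟨x', hx', -, γ, -, -⟩ := hretract d hd
    exact ⟨x', hx', ⟨δ.trans γ⟩⟩
  refine ⟨hN.nonempty.to_type, fun x y => ?_⟩
  obtain ⟨x', hx', hxx'⟩ := hjoined x
  obtain ⟨y', hy', hyy'⟩ := hjoined y
  exact hxx'.trans ((hN.joinedIn x' hx' y' hy').joined.trans hyy'.symm)

end Compression

section ConvexPieces

open CategoryTheory Topology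

variable {E : Type*} [NormedAddCommGroup E] [NormedSpace ℝ E] {S C : Set E}

lemma existsUnique_representableIn_of_convex (hC : Convex ℝ C) (hCS : C ⊆ S) {p q : S}
    (hp : p.1 ∈ C) (hq : q.1 ∈ C) :
    ∃! g : FundamentalGroupoid.mk p ⟶ .mk q, RepresentableIn ((↑) ⁻¹' C) g := by
  have : ContractibleSpace C := hC.contractibleSpace ⟨p, hp⟩
  let j : C(C, S) := .inclusion hCS
  let σ : Path (⟨p, hp⟩ : C) ⟨q, hq⟩ := PathConnectedSpace.somePath _ _
  refine ⟨pathClass (σ.map j.continuous), ⟨_, fun t => (σ t).2, rfl⟩, ?_⟩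
  rintro _ ⟨γ, hγ, rfl⟩
  let γ' : Path (⟨p, hp⟩ : C) ⟨q, hq⟩ :=
    { toFun t := ⟨γ t, hγ t⟩
      source' := by simp
      target' := by simp }
  exact pathClass_eq_iff.2 ((SimplyConnectedSpace.paths_homotopic γ' σ).map j)

end ConvexPieces

section Arrangement

variable (A : Finset ℝ) (f : ℝ → ℝ)

/-- The complement of the arrangement of the lines `x = a + f a * y`, `a ∈ A`, in the plane with
coordinates `(x, y)`. These lines cross the axis `y = 0` at distinct points. -/
def lineComplement : Set (ℂ × ℂ) := {p | ∀ a ∈ A, p.1 ≠ a + f a * p.2}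

/-- The complement of the arrangement of the axis `y = 0` and the lines `x = a + f a * y`,
`a ∈ A`. -/
def axisLineComplement : Set (ℂ × ℂ) := lineComplement A f ∩ {p | p.2 ≠ 0}

/-- The part of `axisLineComplement` lying in the unit tube around the axis. -/
def puncturedTube : Set (axisLineComplement A f) := {p | ‖p.1.2‖ < 1}

/-- The part of `axisLineComplement` with nonreal second coordinate. Each of its points lies on
exactly one real line. -/
def nonrealPart : Set (axisLineComplement A f) := {p | p.1.2.im ≠ 0}

lemma isOpen_lineComplement : IsOpen (lineComplement A f) := by
  simp only [lineComplement, Set.ofPred_forall]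
  exact isOpen_biInter_finset fun a _ => isOpen_ne_fun (by fun_prop) (by fun_prop)

lemma isOpen_axisLineComplement : IsOpen (axisLineComplement A f) :=
  (isOpen_lineComplement A f).inter (isOpen_ne_fun (by fun_prop) (by fun_prop))

instance : LocallyPathConnectedSpace (lineComplement A f) :=
  (isOpen_lineComplement A f).locallyPathConnectedSpace

instance : LocallyPathConnectedSpace (axisLineComplement A f) :=
  (isOpen_axisLineComplement A f).locallyPathConnectedSpace

lemma isOpen_puncturedTube : IsOpen (puncturedTube A f) :=
  isOpen_lt (by fun_prop) (by fun_prop)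

lemma dense_nonrealPart : Dense (nonrealPart A f) :=
  ((dense_compl_singleton (0 : ℝ)).preimage
    (Complex.isOpenMap_im.comp isOpenMap_snd)).preimage
      (isOpen_axisLineComplement A f).isOpenMap_subtype_val

end Arrangement

section Shrinking

open CategoryTheory unitInterval

variable {A : Finset ℝ} {f : ℝ → ℝ}

/-- The homothety of ratio `r` centred at the point where the axis meets the real line through `p`,
a line of slope `p.1.im / p.2.im`. -/
noncomputable def shrink (p : ℂ × ℂ) (r : ℝ) : ℂ × ℂ :=
  (p.1 - ((1 - r) * (p.1.im / p.2.im) : ℝ) * p.2, r * p.2)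

lemma shrink_one (p : ℂ × ℂ) : shrink p 1 = p := by simp [shrink]

/-- A real line meets the real line through `p` only at a real point, unless they coincide. -/
lemma shrink_mem {p : ℂ × ℂ} (hp : p ∈ axisLineComplement A f) (him : p.2.im ≠ 0) {r : ℝ}
    (hr : r ≠ 0) : shrink p r ∈ axisLineComplement A f := by
  refine ⟨fun a ha h => ?_, mul_ne_zero (Complex.ofReal_ne_zero.2 hr) hp.2⟩
  have hslope : p.1.im / p.2.im = f a := by
    have him_eq := congrArg Complex.im h
    simp only [shrink, Complex.sub_im, Complex.im_ofReal_mul, Complex.add_im, Complex.ofReal_im,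
      zero_add] at him_eq
    rw [div_eq_iff him]
    refine mul_left_cancel₀ hr ?_
    linear_combination him_eq + (1 - r) * div_mul_cancel₀ p.1.im him
  refine hp.1 a ha ?_
  simp only [shrink, hslope] at h
  push_cast at h
  linear_combination h

/-- The square swept out by a path while each of its points `p` is shrunk to ratio
`(1 + ‖p.2‖)⁻¹`, which brings it into the punctured tube. -/
noncomputable def shrinkSquare (γ : C(I, axisLineComplement A f))
    (hγ : ∀ t, γ t ∈ nonrealPart A f) : C(I × I, axisLineComplement A f) where
  toFun z := ⟨shrink (γ z.1) (1 + z.2 * ‖(γ z.1).1.2‖)⁻¹,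
    shrink_mem (γ z.1).2 (hγ z.1) (by have := z.2.2.1; positivity)⟩
  continuous_toFun := by
    have h₁ : Continuous fun z : I × I => (1 + z.2 * ‖(γ z.1).1.2‖ : ℝ)⁻¹ :=
      Continuous.inv₀ (by fun_prop) fun z => by have := z.2.2.1; positivity
    have h₂ : Continuous fun z : I × I => (γ z.1).1.1.im / (γ z.1).1.2.im :=
      Continuous.div (by fun_prop) (by fun_prop) fun z => hγ z.1
    unfold shrink
    fun_prop

section

variable {γ : C(I, axisLineComplement A f)} (hγ : ∀ t, γ t ∈ nonrealPart A f)

lemma shrinkSquare_zero (t : I) : shrinkSquare γ hγ (t, 0) = γ t :=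
  Subtype.ext (by simp [shrinkSquare, shrink_one])

lemma shrinkSquare_mem_nonrealPart (z : I × I) : shrinkSquare γ hγ z ∈ nonrealPart A f := by
  have : (1 + z.2 * ‖(γ z.1).1.2‖ : ℝ)⁻¹ ≠ 0 := by have := z.2.2.1; positivity
  change (((1 + z.2 * ‖(γ z.1).1.2‖)⁻¹ : ℝ) * (γ z.1).1.2).im ≠ 0
  rw [Complex.im_ofReal_mul]
  exact mul_ne_zero this (hγ z.1)

lemma norm_shrinkSquare (z : I × I) :
    ‖(shrinkSquare γ hγ z).1.2‖ = ‖(γ z.1).1.2‖ / (1 + z.2 * ‖(γ z.1).1.2‖) := by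
  have hpos : 0 ≤ 1 + z.2 * ‖(γ z.1).1.2‖ := by have := z.2.2.1; positivity
  simp only [shrinkSquare, ContinuousMap.coe_mk, shrink, norm_mul, Complex.norm_real, norm_inv,
    Real.norm_of_nonneg hpos, div_eq_inv_mul]

lemma norm_shrinkSquare_le (z : I × I) : ‖(shrinkSquare γ hγ z).1.2‖ ≤ ‖(γ z.1).1.2‖ := by
  rw [norm_shrinkSquare hγ]
  exact div_le_self (norm_nonneg _) (le_add_of_nonneg_right (mul_nonneg z.2.2.1 (norm_nonneg _)))

lemma shrinkSquare_one_mem_puncturedTube (t : I) :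
    shrinkSquare γ hγ (t, 1) ∈ puncturedTube A f := by
  have hpos : 0 < 1 + ‖(γ t).1.2‖ := by positivity
  rw [puncturedTube, Set.mem_ofPred_eq, norm_shrinkSquare hγ, Set.Icc.coe_one, one_mul,
    div_lt_one hpos]
  exact lt_one_add _

end

lemma exists_representableIn_nonrealPart {p : axisLineComplement A f} (hp : p ∈ nonrealPart A f) :
    ∃ p' ∈ puncturedTube A f, ∃ c : FundamentalGroupoid.mk p ⟶ .mk p',
      RepresentableIn (nonrealPart A f) c := by
  let H := shrinkSquare (.const I p) fun _ => hp
  let δ : Path p (H (0, 1)) := ⟨H.curry 0, shrinkSquare_zero (fun _ => hp) _, rfl⟩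
  exact ⟨_, shrinkSquare_one_mem_puncturedTube (fun _ => hp) _, pathClass δ,
    .pathClass fun _ => shrinkSquare_mem_nonrealPart (fun _ => hp) _⟩

lemma representableIn_puncturedTube {p q : axisLineComplement A f} (hp : p ∈ puncturedTube A f)
    (hq : q ∈ puncturedTube A f) {g : FundamentalGroupoid.mk p ⟶ .mk q}
    (hg : RepresentableIn (nonrealPart A f) g) : RepresentableIn (puncturedTube A f) g := by
  obtain ⟨γ, hγ, rfl⟩ := hg
  let H := shrinkSquare (γ : C(I, axisLineComplement A f)) hγ
  have hH (z : I × I) (hz : γ z.1 ∈ puncturedTube A f) : H z ∈ puncturedTube A f :=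
    (norm_shrinkSquare_le hγ z).trans_lt hz
  let left : Path p (H (0, 1)) := ⟨H.curry 0, (shrinkSquare_zero hγ 0).trans γ.source, rfl⟩
  let right : Path q (H (1, 1)) := ⟨H.curry 1, (shrinkSquare_zero hγ 1).trans γ.target, rfl⟩
  let top : Path (H (0, 1)) (H (1, 1)) := ⟨(H.comp .prodSwap).curry 1, rfl, rfl⟩
  have hsquare : pathClass γ ≫ pathClass right = pathClass left ≫ pathClass top :=
    pathClass_comp_eq_of_square H γ right left top (shrinkSquare_zero hγ) (fun _ => rfl)
      (fun _ => rfl) fun _ => rfl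
  have hleft (t : I) : left t ∈ puncturedTube A f := hH (0, t) (by simpa using hp)
  have hright (t : I) : right t ∈ puncturedTube A f := hH (1, t) (by simpa using hq)
  have htop (t : I) : top t ∈ puncturedTube A f := shrinkSquare_one_mem_puncturedTube hγ t
  rw [← IsIso.eq_comp_inv, Category.assoc] at hsquare
  rw [hsquare]
  exact (RepresentableIn.pathClass hleft).comp
    ((RepresentableIn.pathClass htop).comp (RepresentableIn.pathClass hright).inv)

end Shrinking

section ConvexCells

open CategoryTheory

variable {A : Finset ℝ} {f : ℝ → ℝ} {C : Set (ℂ × ℂ)} {p q : axisLineComplement A f}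

lemma convex_setOf_pos_im_snd (e : ℝ) : Convex ℝ {z : ℂ × ℂ | 0 < e * z.2.im} :=
  (convex_Ioi (0 : ℝ)).linear_preimage (e • Complex.imLm ∘ₗ LinearMap.snd ℝ ℂ ℂ)

lemma representableIn_nonrealPart_of_convex (hC : Convex ℝ C) (hCS : C ⊆ axisLineComplement A f)
    (hpq : 0 < p.1.2.im * q.1.2.im) {g : FundamentalGroupoid.mk p ⟶ .mk q}
    (hg : RepresentableIn ((↑) ⁻¹' C) g) : RepresentableIn (nonrealPart A f) g := by
  have hp : p.1 ∈ C := hg.source_mem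
  have hq : q.1 ∈ C := hg.target_mem
  have hside : 0 < p.1.2.im * p.1.2.im := mul_self_pos.2 (left_ne_zero_of_mul hpq.ne')
  obtain ⟨g', hg', -⟩ := existsUnique_representableIn_of_convex (p := p) (q := q)
    (hC.inter (convex_setOf_pos_im_snd p.1.2.im)) (Set.inter_subset_left.trans hCS)
    ⟨hp, hside⟩ ⟨hq, hpq⟩
  obtain rfl : g = g' := (existsUnique_representableIn_of_convex hC hCS hp hq).unique hg
    (hg'.mono fun _ hz => hz.1)
  exact hg'.mono fun z hz => right_ne_zero_of_mul hz.2.ne'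

lemma compressibleInto_of_mul_im_pos (hC : Convex ℝ C) (hCS : C ⊆ axisLineComplement A f)
    (hpq : 0 < p.1.2.im * q.1.2.im) {g : FundamentalGroupoid.mk p ⟶ .mk q}
    (hg : RepresentableIn ((↑) ⁻¹' C) g) :
    CompressibleInto (puncturedTube A f) (nonrealPart A f) g :=
  (representableIn_nonrealPart_of_convex hC hCS hpq hg).compressibleInto
    fun _ _ _ hp hq => representableIn_puncturedTube hp hq

/-- Within a convex set there is only one way to cross the real hyperplane `Im y = 0`, so it
suffices to compress a single crossing. -/
lemma compressibleInto_of_crossing (hC : Convex ℝ C) (hCS : C ⊆ axisLineComplement A f)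
    {u v : axisLineComplement A f} (hu : 0 < u.1.2.im) (hv : v.1.2.im < 0)
    {b : FundamentalGroupoid.mk u ⟶ .mk v} (hb : RepresentableIn ((↑) ⁻¹' C) b)
    (hb' : CompressibleInto (puncturedTube A f) (nonrealPart A f) b)
    (hp : p ∈ nonrealPart A f) (hq : q ∈ nonrealPart A f) {g : FundamentalGroupoid.mk p ⟶ .mk q}
    (hg : RepresentableIn ((↑) ⁻¹' C) g) :
    CompressibleInto (puncturedTube A f) (nonrealPart A f) g := by
  have cross : ∀ {p q : axisLineComplement A f} {g : FundamentalGroupoid.mk p ⟶ .mk q},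
      0 < p.1.2.im → q.1.2.im < 0 → RepresentableIn ((↑) ⁻¹' C) g →
        CompressibleInto (puncturedTube A f) (nonrealPart A f) g := by
    intro p q g hp hq hg
    obtain ⟨g₁, hg₁, -⟩ := existsUnique_representableIn_of_convex hC hCS hg.source_mem hb.source_mem
    obtain ⟨g₂, hg₂, -⟩ := existsUnique_representableIn_of_convex hC hCS hb.target_mem hg.target_mem
    obtain rfl : g = g₁ ≫ b ≫ g₂ := (existsUnique_representableIn_of_convex hC hCS
      hg.source_mem hg.target_mem).unique hg (hg₁.comp (hb.comp hg₂))
    have hretract (x) (hx : x ∈ nonrealPart A f) := exists_representableIn_nonrealPart hx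
    exact (compressibleInto_of_mul_im_pos hC hCS (mul_pos hp hu) hg₁).comp hretract hu.ne'
      (hb'.comp hretract hv.ne
        (compressibleInto_of_mul_im_pos hC hCS (mul_pos_of_neg_of_neg hv hq) hg₂))
  rcases lt_or_gt_of_ne hp with hp | hp <;> rcases lt_or_gt_of_ne hq with hq | hq
  · exact compressibleInto_of_mul_im_pos hC hCS (mul_pos_of_neg_of_neg hp hq) hg
  · simpa using (cross hq hp hg.inv).inv
  · exact cross hp hq hg
  · exact compressibleInto_of_mul_im_pos hC hCS (mul_pos hp hq) hg

/-- A convex cell disjoint from every real line of slope less than `1` and from the axis, which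
meets the real hyperplane `Im y = 0`. The signs `k` and `m` select the side of `Re y = 0` and of
`Im x = 0`. -/
def crossingCell (k m : ℝ) : Set (ℂ × ℂ) := {z | 0 < k * z.2.re ∧ |z.2.im| < m * z.1.im}

lemma convex_crossingCell (k m : ℝ) : Convex ℝ (crossingCell k m) := by
  have h₁ : Convex ℝ {z : ℂ × ℂ | 0 < k * z.2.re} :=
    (convex_Ioi (0 : ℝ)).linear_preimage (k • Complex.reLm ∘ₗ LinearMap.snd ℝ ℂ ℂ)
  have h₂ : Convex ℝ {z : ℂ × ℂ | 0 < m * z.1.im - z.2.im} := (convex_Ioi (0 : ℝ)).linear_preimage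
    (m • Complex.imLm ∘ₗ LinearMap.fst ℝ ℂ ℂ - Complex.imLm ∘ₗ LinearMap.snd ℝ ℂ ℂ)
  have h₃ : Convex ℝ {z : ℂ × ℂ | 0 < m * z.1.im + z.2.im} := (convex_Ioi (0 : ℝ)).linear_preimage
    (m • Complex.imLm ∘ₗ LinearMap.fst ℝ ℂ ℂ + Complex.imLm ∘ₗ LinearMap.snd ℝ ℂ ℂ)
  convert h₁.inter (h₂.inter h₃) using 1
  ext z
  simp only [crossingCell, Set.mem_inter_iff, Set.mem_ofPred_eq, abs_lt]
  constructor <;> rintro ⟨_, _, _⟩ <;> refine ⟨by assumption, ?_, ?_⟩ <;> linarith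

lemma crossingCell_subset (hf : ∀ a ∈ A, |f a| < 1) {k m : ℝ} (hm : |m| = 1) :
    crossingCell k m ⊆ axisLineComplement A f := by
  rintro z ⟨hre, him⟩
  refine ⟨fun a ha h => ?_, fun h => by simp [h] at hre⟩
  have hzim : z.1.im = f a * z.2.im := by simpa using congrArg Complex.im h
  have hle : m * z.1.im ≤ |f a| * |z.2.im| := by
    rw [hzim, ← abs_mul, ← one_mul |f a * z.2.im|, ← hm, ← abs_mul]
    exact le_abs_self _
  exact him.not_ge (hle.trans (mul_le_of_le_one_left (abs_nonneg _) (hf a ha).le))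

lemma compressibleInto_of_crossingCell (hf : ∀ a ∈ A, |f a| < 1) {k m : ℝ} (hk : |k| = 1)
    (hm : |m| = 1) (hp : p ∈ nonrealPart A f) (hq : q ∈ nonrealPart A f)
    {g : FundamentalGroupoid.mk p ⟶ .mk q} (hg : RepresentableIn ((↑) ⁻¹' crossingCell k m) g) :
    CompressibleInto (puncturedTube A f) (nonrealPart A f) g := by
  have hkk : k * k = 1 := by rw [← abs_mul_abs_self, hk, one_mul]
  have hmm : m * m = 1 := by rw [← abs_mul_abs_self, hm, one_mul]
  have hcell := crossingCell_subset hf (k := k) hm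
  let y (s : ℝ) : ℂ × ℂ := (⟨0, m⟩, ⟨k / 2, s⟩)
  have hy {s : ℝ} (hs : |s| < 1 / 2) : y s ∈ crossingCell k m ∩ {z | ‖z.2‖ < 1} := by
    refine ⟨⟨by simp only [y]; linarith, by simp only [y]; linarith⟩, ?_⟩
    refine (Complex.norm_le_abs_re_add_abs_im _).trans_lt ?_
    simp only [y, abs_div, hk, Nat.abs_ofNat]
    linarith
  have hu := hy (s := 1 / 4) (by norm_num [abs_of_pos])
  have hv := hy (s := -1 / 4) (by norm_num [abs_of_pos])
  have hconvex : Convex ℝ (crossingCell k m ∩ {z | ‖z.2‖ < 1}) := by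
    simpa [Set.preimage, mem_ball_zero_iff] using (convex_crossingCell k m).inter
      ((convex_ball (0 : ℂ) 1).linear_preimage (LinearMap.snd ℝ ℂ ℂ))
  obtain ⟨b, hb, -⟩ := existsUnique_representableIn_of_convex
    (p := (⟨_, hcell hu.1⟩ : axisLineComplement A f)) (q := ⟨_, hcell hv.1⟩)
    hconvex (Set.inter_subset_left.trans hcell) hu hv
  exact compressibleInto_of_crossing (convex_crossingCell k m) hcell (by norm_num [y])
    (by norm_num [y]) (hb.mono fun _ hz => hz.1)
    (RepresentableIn.compressibleInto_of_endpoints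
      (fun _ _ _ hp hq => representableIn_puncturedTube hp hq) hu.2 hv.2 (hb.mono fun _ hz => hz.2))
    hp hq hg

/-- Near a point with real second coordinate, crossings can be moved into a crossing cell. -/
lemma exists_isOpen_compressibleInto (hf : ∀ a ∈ A, |f a| < 1) {x : axisLineComplement A f}
    (hx : x ∉ nonrealPart A f) : ∃ U, IsOpen U ∧ x ∈ U ∧
      ∀ ⦃p q : axisLineComplement A f⦄ (g : FundamentalGroupoid.mk p ⟶ .mk q),
        p ∈ nonrealPart A f → q ∈ nonrealPart A f → RepresentableIn U g →
          CompressibleInto (puncturedTube A f) (nonrealPart A f) g := by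
  have him : x.1.2.im = 0 := not_not.1 hx
  obtain ⟨r, hr, hball⟩ := Metric.isOpen_iff.1 (isOpen_axisLineComplement A f) x.1 x.2
  obtain ⟨k, hk, hkx⟩ := RCLike.exists_norm_eq_mul_self x.1.2.re
  obtain ⟨m, hm, hmx⟩ := RCLike.exists_norm_eq_mul_self x.1.1.im
  have hre : 0 < k * x.1.2.re :=
    hkx ▸ norm_pos_iff.2 fun h => x.2.2 (Complex.ext h him)
  have hmm : m * m = 1 := by rw [← abs_mul_abs_self, ← Real.norm_eq_abs, hm, one_mul]
  let w (s : ℝ) : ℂ × ℂ := x.1 + (⟨0, m * (r / 2)⟩, ⟨0, s⟩)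
  have hw {s : ℝ} (hs : |s| < r / 2) : w s ∈ Metric.ball x.1 r ∩ crossingCell k m := by
    refine ⟨?_, by simpa [w] using hre, ?_⟩
    · have hnorm (t : ℝ) : ‖(⟨0, t⟩ : ℂ)‖ = |t| := by
        simp [Complex.norm_eq_sqrt_sq_add_sq, Real.sqrt_sq_eq_abs]
      rw [mem_ball_iff_norm, add_sub_cancel_left, Prod.norm_mk, hnorm, hnorm, abs_mul,
        ← Real.norm_eq_abs m, hm, one_mul, abs_of_pos (half_pos hr)]
      exact max_lt (half_lt_self hr) (hs.trans (half_lt_self hr))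
    · have him_fst : m * (w s).1.im = ‖x.1.1.im‖ + r / 2 := by
        simp only [w, Prod.fst_add, Complex.add_im]
        linear_combination -hmx + r / 2 * hmm
      rw [him_fst]
      simpa [w, him] using hs.trans_le (le_add_of_nonneg_left (abs_nonneg _))
  have hu := hw (s := r / 4) (by rw [abs_of_pos] <;> linarith)
  have hv := hw (s := -(r / 4)) (by rw [abs_neg, abs_of_pos] <;> linarith)
  obtain ⟨b, hb, -⟩ := existsUnique_representableIn_of_convex
    (p := (⟨_, hball hu.1⟩ : axisLineComplement A f)) (q := ⟨_, hball hv.1⟩)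
    ((convex_ball x.1 r).inter (convex_crossingCell k m))
    (Set.inter_subset_left.trans hball) hu hv
  have hu_im : 0 < (w (r / 4)).2.im := by simpa [w, him] using hr
  have hv_im : (w (-(r / 4))).2.im < 0 := by simpa [w, him] using hr
  exact ⟨_, Metric.isOpen_ball.preimage continuous_subtype_val, Metric.mem_ball_self hr,
    fun p q g hp hq hg => compressibleInto_of_crossing (convex_ball x.1 r) hball hu_im hv_im
      (hb.mono fun _ hz => hz.1) (compressibleInto_of_crossingCell hf hk hm hu_im.ne' hv_im.ne
        (hb.mono fun _ hz => hz.2)) hp hq hg⟩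

theorem pathSurjective_puncturedTube (hf : ∀ a ∈ A, |f a| < 1) :
    PathSurjective (puncturedTube A f) := by
  refine pathSurjective_of_compressible (isOpen_puncturedTube A f) (dense_nonrealPart A f)
    (fun _ => exists_representableIn_nonrealPart) fun x => ?_
  by_cases hx : x ∈ nonrealPart A f
  · refine ⟨nonrealPart A f, isOpen_ne_fun (by fun_prop) (by fun_prop), hx, fun p q g _ _ hg => ?_⟩
    exact hg.compressibleInto fun _ _ _ hp hq => representableIn_puncturedTube hp hq
  · exact exists_isOpen_compressibleInto hf hx

end ConvexCells

section Tube

open Topology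

variable {f : ℝ → ℝ}

/-- The shear of slope `f (Re x)` over the point `x` of the axis, which maps the vertical line over
a real point `a` onto the line `x = a + f a * y`. -/
def axisShear (f : ℝ → ℝ) (p : ℂ × ℂ) : ℂ × ℂ := (p.1 + f p.1.re * p.2, p.2)

/-- The tube around the axis made of unit discs in the lines of slope `f (Re x)`, the discs being
parametrised by the plane. -/
noncomputable def axisTube (f : ℝ → ℝ) (p : ℂ × ℂ) : ℂ × ℂ :=
  axisShear f (p.1, OpenPartialHomeomorph.univUnitBall p.2)

lemma axisTube_snd_eq_zero_iff {p : ℂ × ℂ} : (axisTube f p).2 = 0 ↔ p.2 = 0 := by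
  have : √(1 + ‖p.2‖ ^ 2) ≠ 0 := by positivity
  simp [axisTube, axisShear, OpenPartialHomeomorph.univUnitBall_apply, this]

lemma abs_comp_re_sub_le (hlip : LipschitzWith (1 / 4) f) (z w : ℂ) :
    |f z.re - f w.re| ≤ 1 / 4 * ‖z - w‖ := by
  refine (hlip.dist_le_mul z.re w.re).trans ?_
  rw [Real.dist_eq, ← Complex.sub_re, NNReal.coe_div, NNReal.coe_one, NNReal.coe_ofNat]
  exact mul_le_mul_of_nonneg_left (Complex.abs_re_le_norm _) (by norm_num)

lemma approximatesLinearOn_axisShear (hlip : LipschitzWith (1 / 4) f) (hb : ∀ x, |f x| ≤ 1 / 4) :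
    ApproximatesLinearOn (axisShear f) (ContinuousLinearEquiv.refl ℝ (ℂ × ℂ) : ℂ × ℂ →L[ℝ] ℂ × ℂ)
      (Set.univ ×ˢ Metric.ball 0 1) (1 / 2) := by
  rintro p - q ⟨-, hq⟩
  have hdiff : axisShear f p - axisShear f q - (p - q) =
      (f p.1.re * (p.2 - q.2) + (f p.1.re - f q.1.re : ℝ) * q.2, 0) := by
    ext <;> simp [axisShear]
    ring
  have hslope : ‖(f p.1.re : ℂ) * (p.2 - q.2)‖ ≤ 1 / 4 * ‖p - q‖ := by
    rw [norm_mul, Complex.norm_real]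
    exact mul_le_mul (hb _) (norm_snd_le (p - q)) (norm_nonneg _) (by norm_num)
  have hfoot : ‖((f p.1.re - f q.1.re : ℝ) : ℂ) * q.2‖ ≤ 1 / 4 * ‖p - q‖ := by
    rw [norm_mul, Complex.norm_real]
    refine (mul_le_of_le_one_right (norm_nonneg _) (mem_ball_zero_iff.1 hq).le).trans ?_
    exact (abs_comp_re_sub_le hlip _ _).trans
      (mul_le_mul_of_nonneg_left (norm_fst_le (p - q)) (by norm_num))
  change ‖axisShear f p - axisShear f q - (p - q)‖ ≤ _
  rw [hdiff, Prod.norm_mk, norm_zero, max_eq_left (norm_nonneg _)]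
  refine (norm_add_le_of_le hslope hfoot).trans_eq ?_
  rw [NNReal.coe_div, NNReal.coe_one, NNReal.coe_ofNat]
  ring

lemma surjective_axisShear_slice (hlip : LipschitzWith (1 / 4) f) {y : ℂ} (hy : ‖y‖ ≤ 1) :
    Function.Surjective fun x : ℂ => x + f x.re * y := by
  refine ApproximatesLinearOn.surjective (f' := ContinuousLinearEquiv.refl ℝ ℂ) (c := 1 / 4)
    (fun x _ x' _ => ?_) (Or.inr ?_)
  · have hdiff : x + f x.re * y - (x' + f x'.re * y) - (x - x') = (f x.re - f x'.re : ℝ) * y := by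
      push_cast
      ring
    change ‖x + f x.re * y - (x' + f x'.re * y) - (x - x')‖ ≤ _
    rw [hdiff, norm_mul, Complex.norm_real]
    exact (mul_le_of_le_one_right (norm_nonneg _) hy).trans (abs_comp_re_sub_le hlip _ _)
  · norm_num

lemma isOpenEmbedding_axisTube (hlip : LipschitzWith (1 / 4) f) (hb : ∀ x, |f x| ≤ 1 / 4) :
    IsOpenEmbedding (axisTube f) := by
  let shear := (approximatesLinearOn_axisShear hlip hb).toOpenPartialHomeomorph _ _
    (Or.inr (by norm_num)) (isOpen_univ.prod Metric.isOpen_ball)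
  exact (((OpenPartialHomeomorph.refl ℂ).prod OpenPartialHomeomorph.univUnitBall).trans'
    shear rfl).isOpenEmbedding Set.univ_prod_univ

lemma range_axisTube (hlip : LipschitzWith (1 / 4) f) :
    Set.range (axisTube f) = {p | ‖p.2‖ < 1} := by
  ext p
  constructor
  · rintro ⟨z, rfl⟩
    exact mem_ball_zero_iff.1
      (OpenPartialHomeomorph.univUnitBall.map_source (x := z.2) (Set.mem_univ _))
  · intro hp
    obtain ⟨x, hx⟩ := surjective_axisShear_slice hlip (le_of_lt hp) p.1
    refine ⟨(x, OpenPartialHomeomorph.univUnitBall.symm p.2), ?_⟩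
    rw [axisTube, OpenPartialHomeomorph.univUnitBall.right_inv (mem_ball_zero_iff.2 hp)]
    exact Prod.ext hx rfl

end Tube

section NormalForm

open CategoryTheory Topology

variable (A : Finset ℝ) {f : ℝ → ℝ} (hlip : LipschitzWith (1 / 4) f) (hb : ∀ x, |f x| ≤ 1 / 4)

/-- The complement in the axis of its intersection with the arrangement. -/
def puncturedAxis : Set ℂ := {x | ∀ a ∈ A, x ≠ (a : ℝ)}

instance : PathConnectedSpace (puncturedAxis A) := by
  rw [← isPathConnected_iff_pathConnectedSpace]
  convert (A.finite_toSet.image ((↑) : ℝ → ℂ)).countable.isPathConnected_compl_of_one_lt_rank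
    (Complex.rank_real_complex ▸ Cardinal.one_lt_two)
  ext x
  simp [puncturedAxis, eq_comm]

variable {A}

include hlip hb in
lemma axisTube_mem_lineComplement_iff {z : ℂ × ℂ} :
    axisTube f z ∈ lineComplement A f ↔ z.1 ∈ puncturedAxis A := by
  refine forall₂_congr fun a _ => not_congr ?_
  trans axisTube f z = axisTube f ((a : ℝ), z.2)
  · simp [axisTube, axisShear, Prod.ext_iff]
  · rw [(isOpenEmbedding_axisTube hlip hb).injective.eq_iff]
    simp [Prod.ext_iff]

variable (A)

/-- The restriction of `axisTube f` to a neighbourhood of `puncturedAxis A` in the complement of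
the lines meeting the axis. -/
noncomputable def tube : C(puncturedAxis A × ℂ, lineComplement A f) where
  toFun z := ⟨axisTube f (z.1, z.2), (axisTube_mem_lineComplement_iff hlip hb).2 z.1.2⟩
  continuous_toFun := Continuous.subtype_mk
    ((isOpenEmbedding_axisTube hlip hb).continuous.comp (by fun_prop)) _

/-- The universal covering, in the second coordinate, of the punctured tube. -/
noncomputable def tubeCovering : C(puncturedAxis A × ℂ, axisLineComplement A f) where
  toFun z := ⟨tube A hlip hb (z.1, Complex.exp z.2), (tube A hlip hb _).2,
    axisTube_snd_eq_zero_iff.not.2 (Complex.exp_ne_zero z.2)⟩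
  continuous_toFun := Continuous.subtype_mk
    (continuous_subtype_val.comp ((tube A hlip hb).continuous.comp (by fun_prop))) _

lemma axisLineComplement_subset : axisLineComplement A f ⊆ lineComplement A f :=
  Set.inter_subset_left

lemma isPuncturedTube_axis :
    IsPuncturedTube (.inclusion (axisLineComplement_subset A)) (tube A hlip hb)
      (tubeCovering A hlip hb) where
  isOpenEmbedding_complement :=
    .of_comp _ (isOpen_lineComplement A f).isOpenEmbedding_subtypeVal
      (isOpen_axisLineComplement A f).isOpenEmbedding_subtypeVal
  isOpenEmbedding_tube := by
    have hF : IsOpen (puncturedAxis A) := by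
      simp only [puncturedAxis, Set.ofPred_forall]
      exact isOpen_biInter_finset fun a _ => isOpen_ne
    exact .of_comp _ (isOpen_lineComplement A f).isOpenEmbedding_subtypeVal
      ((isOpenEmbedding_axisTube hlip hb).comp (hF.isOpenEmbedding_subtypeVal.prodMap .id))
  apply_exp _ _ := rfl
  apply_zero_notMem := by
    rintro x ⟨p, hp⟩
    exact p.2.2 ((congrArg (fun p : lineComplement A f => p.1.2) hp).trans
      (axisTube_snd_eq_zero_iff.2 rfl))
  cover := by
    refine Set.eq_univ_of_forall fun p => ?_
    by_cases hp : p.1.2 = 0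
    · obtain ⟨z, hz⟩ := (range_axisTube hlip).superset (show ‖p.1.2‖ < 1 by simp [hp])
      have hmem := (axisTube_mem_lineComplement_iff hlip hb).1 (hz ▸ p.2)
      exact .inr ⟨(⟨z.1, hmem⟩, z.2), Subtype.ext hz⟩
    · exact .inl ⟨⟨p, p.2, hp⟩, rfl⟩

lemma range_tubeCovering : Set.range (tubeCovering A hlip hb) = puncturedTube A f := by
  refine (isPuncturedTube_axis A hlip hb).range_covering.trans (Set.ext fun p => ?_)
  refine Iff.trans ?_ (Set.ext_iff.1 (range_axisTube hlip) p.1)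
  constructor
  · rintro ⟨z, hz⟩
    exact ⟨(z.1, z.2), congrArg Subtype.val hz⟩
  · rintro ⟨z, hz⟩
    have hz1 := (axisTube_mem_lineComplement_iff hlip hb).1 (hz ▸ p.2.1)
    exact ⟨(⟨z.1, hz1⟩, z.2), Subtype.ext hz⟩

include hlip hb in
lemma pathConnectedSpace_axisLineComplement : PathConnectedSpace (axisLineComplement A f) := by
  refine pathConnectedSpace_of_dense_of_retract (dense_nonrealPart A f) ?_
    fun _ => exists_representableIn_nonrealPart
  rw [← range_tubeCovering A hlip hb]
  exact isPathConnected_range (tubeCovering A hlip hb).continuous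

lemma univUnitBall_mul {u : ℂ} (hu : ‖u‖ = 1) (w : ℂ) :
    OpenPartialHomeomorph.univUnitBall (w * u) = OpenPartialHomeomorph.univUnitBall w * u := by
  simp [OpenPartialHomeomorph.univUnitBall_apply, hu, mul_assoc]

lemma exists_hom_meridian_axis (z : puncturedAxis A × ℂ) :
    ∃ d : FundamentalGroup (axisLineComplement A f) (tubeCovering A hlip hb z) →*
        Multiplicative ℤ,
      d (pathClass ((isPuncturedTube_axis A hlip hb).meridian z)) = Multiplicative.ofAdd 1 := by
  let snd : C(axisLineComplement A f, {y : ℂ // y ≠ 0}) := ⟨fun p => ⟨p.1.2, p.2.2⟩, by fun_prop⟩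
  have hlog := Complex.exp_log (snd (tubeCovering A hlip hb z)).2
  obtain ⟨d, hd⟩ := exists_windingHom hlog
  refine ⟨d.comp (FundamentalGroup.map snd _), hd 1 (.segment _ _) (.map _ snd.continuous)
    fun t => ?_⟩
  have hnorm : ‖Complex.exp (t * (2 * Real.pi * Complex.I))‖ = 1 := by
    convert Complex.norm_exp_ofReal_mul_I (t * (2 * Real.pi)) using 3
    push_cast
    ring
  have hmeridian : ((snd ((isPuncturedTube_axis A hlip hb).meridian z t) : {y : ℂ // y ≠ 0}) : ℂ) =
      OpenPartialHomeomorph.univUnitBall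
        (Complex.exp (Path.segment z.2 (z.2 + 2 * Real.pi * Complex.I) t)) := rfl
  rw [exp_segment, hlog, Int.cast_one, one_mul]
  refine Eq.trans ?_ hmeridian.symm
  rw [exp_segment, univUnitBall_mul hnorm]
  rfl

include hlip hb in
theorem nonempty_mulEquiv_axisLineComplement (p : axisLineComplement A f) :
    Nonempty (FundamentalGroup (axisLineComplement A f) p ≃*
      FundamentalGroup (lineComplement A f) ⟨p, p.2.1⟩ × Multiplicative ℤ) := by
  have := pathConnectedSpace_axisLineComplement A hlip hb
  let x₀ : puncturedAxis A := Classical.arbitrary _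
  obtain ⟨d, hd⟩ := exists_hom_meridian_axis A hlip hb (x₀, 0)
  have hsurj : PathSurjective (Set.range (tubeCovering A hlip hb)) := by
    rw [range_tubeCovering]
    exact pathSurjective_puncturedTube fun a _ => (hb a).trans_lt (by norm_num)
  obtain ⟨e⟩ := (isPuncturedTube_axis A hlip hb).nonempty_mulEquiv_prod hsurj (x₀, 0) hd
  let γ := PathConnectedSpace.somePath p (tubeCovering A hlip hb (x₀, 0))
  let γ' := γ.map (ContinuousMap.inclusion (axisLineComplement_subset A (f := f))).continuous
  exact ⟨((FundamentalGroup.fundamentalGroupMulEquivOfPath γ).trans e).trans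
    (.prodCongr (FundamentalGroup.fundamentalGroupMulEquivOfPath γ').symm (.refl _))⟩

end NormalForm

section Coordinates

open Filter Topology

lemma exists_lipschitzWith_eqOn_div {X : Type*} [MetricSpace X] (s : Finset X) (g : X → ℝ)
    {K : NNReal} (hK : 0 < K) {b : ℝ} (hb : 0 < b) :
    ∃ r : ℝ, 0 < r ∧ ∃ f : X → ℝ, LipschitzWith K f ∧ (∀ x, |f x| ≤ b) ∧
      ∀ x ∈ s, f x = g x / r := by
  have hbound : ∀ᶠ r : ℝ in atTop, ∀ x ∈ s, |g x| ≤ b * r :=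
    (Finset.eventually_all s).2 fun x _ =>
      (tendsto_id.const_mul_atTop hb).eventually_ge_atTop |g x|
  have hslope : ∀ᶠ r : ℝ in atTop, ∀ x ∈ s, ∀ y ∈ s, |g x - g y| ≤ K * dist x y * r := by
    refine (Finset.eventually_all s).2 fun x _ => (Finset.eventually_all s).2 fun y _ => ?_
    rcases eq_or_ne x y with rfl | hxy
    · simp
    · exact (tendsto_id.const_mul_atTop (mul_pos (NNReal.coe_pos.2 hK)
        (dist_pos.2 hxy))).eventually_ge_atTop _
  obtain ⟨r, hr, hrb, hrK⟩ := ((eventually_gt_atTop 0).and (hbound.and hslope)).exists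
  have hlip : LipschitzOnWith K (fun x => g x / r) s := by
    refine .of_dist_le_mul fun x hx y hy => ?_
    rw [Real.dist_eq, ← sub_div, abs_div, abs_of_pos hr, div_le_iff₀ hr]
    exact hrK x hx y hy
  obtain ⟨f, hf, hfg⟩ := hlip.extend_real
  refine ⟨r, hr, fun x => max (-b) (min b (f x)), (hf.const_min b).const_max (-b),
    fun x => abs_le.2 ⟨le_max_left _ _, max_le (by linarith) (min_le_left _ _)⟩, fun x hx => ?_⟩
  have hfx : |f x| ≤ b := by
    rw [← hfg hx, abs_div, abs_of_pos hr, div_le_iff₀ hr]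
    exact hrb x hx
  simp only [min_eq_right (le_of_abs_le hfx), max_eq_right (neg_le_of_abs_le hfx)]
  exact (hfg hx).symm

lemma sq_add_sq_ne_zero {a b : ℝ} (h : (a, b) ≠ (0, 0)) : (a ^ 2 + b ^ 2 : ℂ) ≠ 0 := by
  norm_cast
  contrapose! h
  rw [Prod.mk_inj]
  constructor <;> nlinarith [sq_nonneg a, sq_nonneg b]

/-- Orthogonal coordinates in which the line `a * x + b * y = c` becomes the axis of the first
coordinate. -/
noncomputable def lineCoords {a b : ℝ} (c : ℝ) (h : (a, b) ≠ (0, 0)) : (ℂ × ℂ) ≃ₜ (ℂ × ℂ) where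
  toFun p := (a * p.2 - b * p.1, a * p.1 + b * p.2 - c)
  invFun q := ((a * (q.2 + c) - b * q.1) / (a ^ 2 + b ^ 2),
    (b * (q.2 + c) + a * q.1) / (a ^ 2 + b ^ 2))
  left_inv p := by
    have := sq_add_sq_ne_zero h
    ext <;> simp only <;> field_simp <;> ring
  right_inv q := by
    have := sq_add_sq_ne_zero h
    ext <;> simp only <;> field_simp <;> ring
  continuous_toFun := by fun_prop
  continuous_invFun := by fun_prop

lemma isRealCLine_preimage_lineCoords_symm {a b c : ℝ} (h : (a, b) ≠ (0, 0)) {l : Set (ℂ × ℂ)}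
    (hl : IsRealCLine l) : IsRealCLine ((lineCoords c h).symm ⁻¹' l) := by
  obtain ⟨a', b', c', h', rfl⟩ := hl
  refine ⟨a * b' - b * a', a * a' + b * b', c' * (a ^ 2 + b ^ 2) - (a * a' + b * b') * c, ?_, ?_⟩
  · intro h0
    obtain ⟨hdet, hinner⟩ := Prod.mk_inj.1 h0
    have hprod : (a ^ 2 + b ^ 2) * (a' ^ 2 + b' ^ 2) = 0 := by
      linear_combination (a * b' - b * a') * hdet + (a * a' + b * b') * hinner
    have := mul_ne_zero (sq_add_sq_ne_zero h) (sq_add_sq_ne_zero h')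
    exact this (mod_cast hprod)
  · ext ⟨x, y⟩
    have := sq_add_sq_ne_zero h
    change a' * ((a * (y + c) - b * x) / (a ^ 2 + b ^ 2) : ℂ) +
      b' * ((b * (y + c) + a * x) / (a ^ 2 + b ^ 2)) = c' ↔ _
    rw [Set.mem_ofPred_eq, ← mul_div_assoc, ← mul_div_assoc, ← add_div, div_eq_iff this]
    push_cast
    constructor <;> intro hxy <;> linear_combination hxy

lemma exists_eq_graph {l : Set (ℂ × ℂ)} (hl : IsRealCLine l) (hmeet : ∃ p ∈ l, p.2 = 0)
    (hne : l ≠ {p | p.2 = 0}) : ∃ α μ : ℝ, l = {p : ℂ × ℂ | p.1 = α + μ * p.2} := by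
  obtain ⟨a, b, c, h, rfl⟩ := hl
  obtain ⟨p, hp, hp0⟩ := hmeet
  have ha : a ≠ 0 := by
    rintro rfl
    obtain rfl : c = 0 := by simpa [hp0, eq_comm] using hp
    have hb : b ≠ 0 := by simpa using h
    exact hne (by simp [hb])
  refine ⟨c / a, -b / a, Set.ext fun q => ?_⟩
  rw [Set.mem_ofPred_eq, Set.mem_ofPred_eq, ← eq_sub_iff_add_eq,
    mul_comm, ← eq_div_iff (Complex.ofReal_ne_zero.2 ha)]
  push_cast
  rw [sub_div, sub_eq_add_neg, neg_div, neg_mul, div_mul_eq_mul_div]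

lemma exists_graph_coordinates {L' : Finset (Set (ℂ × ℂ))} {L₀ : Set (ℂ × ℂ)}
    (hL' : ∀ l ∈ L', IsRealCLine l) (hL₀ : IsRealCLine L₀) (hne : L₀ ∉ L')
    (hmeet : ∀ l ∈ L', ∃ p, p ∈ L₀ ∧ p ∈ l)
    (hsimple : ∀ l ∈ L', ∀ p, p ∈ L₀ → p ∈ l → ∀ l' ∈ L', l' ≠ l → p ∉ l') :
    ∃ Φ : (ℂ × ℂ) ≃ₜ (ℂ × ℂ), (∀ p, p ∈ L₀ ↔ (Φ p).2 = 0) ∧ ∃ α μ : Set (ℂ × ℂ) → ℝ,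
      Set.InjOn α L' ∧ ∀ l ∈ L', ∀ p, p ∈ l ↔ (Φ p).1 = α l + μ l * (Φ p).2 := by
  obtain ⟨a, b, c, h, hL₀⟩ := hL₀
  let Φ := lineCoords c h
  have haxis (p) : p ∈ L₀ ↔ (Φ p).2 = 0 := by rw [hL₀]; exact sub_eq_zero.symm
  have hgraph : ∀ l ∈ L', ∃ α μ : ℝ, ∀ p, p ∈ l ↔ (Φ p).1 = α + μ * (Φ p).2 := by
    intro l hl
    obtain ⟨p, hp, hpl⟩ := hmeet l hl
    have hl₀ : Φ.symm ⁻¹' l ≠ {p | p.2 = 0} := by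
      intro hl₀
      refine hne (?_ : L₀ ∈ L')
      convert hl
      ext p
      simpa [haxis] using (Set.ext_iff.1 hl₀ (Φ p)).symm
    obtain ⟨α, μ, hαμ⟩ := exists_eq_graph (isRealCLine_preimage_lineCoords_symm h (hL' l hl))
      ⟨Φ p, by simpa [Φ] using hpl, (haxis p).1 hp⟩ hl₀
    exact ⟨α, μ, fun p => by simpa [Φ] using Set.ext_iff.1 hαμ (Φ p)⟩
  choose! α μ hαμ using hgraph
  refine ⟨Φ, haxis, α, μ, fun l hl l' hl' hα => by_contra fun hll' => ?_, hαμ⟩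
  obtain ⟨p, hp, hpl⟩ := hmeet l hl
  refine hsimple l hl p hp hpl l' hl' (Ne.symm hll') ((hαμ l' hl' p).2 ?_)
  rw [(hαμ l hl p).1 hpl, (haxis p).1 hp, hα]
  simp

theorem exists_normalForm {L' : Finset (Set (ℂ × ℂ))} {L₀ : Set (ℂ × ℂ)}
    (hL' : ∀ l ∈ L', IsRealCLine l) (hL₀ : IsRealCLine L₀) (hne : L₀ ∉ L')
    (hmeet : ∀ l ∈ L', ∃ p, p ∈ L₀ ∧ p ∈ l)
    (hsimple : ∀ l ∈ L', ∀ p, p ∈ L₀ → p ∈ l → ∀ l' ∈ L', l' ≠ l → p ∉ l') :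
    ∃ (A : Finset ℝ) (f : ℝ → ℝ), LipschitzWith (1 / 4) f ∧ (∀ x, |f x| ≤ 1 / 4) ∧
      ∃ Φ : (ℂ × ℂ) ≃ₜ (ℂ × ℂ), (∀ p, (∀ l ∈ L', p ∉ l) ↔ Φ p ∈ lineComplement A f) ∧
        ∀ p, (∀ l ∈ insert L₀ L', p ∉ l) ↔ Φ p ∈ axisLineComplement A f := by
  obtain ⟨Φ, haxis, α, μ, hα, hgraph⟩ := exists_graph_coordinates hL' hL₀ hne hmeet hsimple
  obtain ⟨r, hr, f, hlip, hb, hf⟩ := exists_lipschitzWith_eqOn_div (L'.image α)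
    (μ ∘ Function.invFunOn α L') (K := 1 / 4) (by norm_num) (b := 1 / 4) (by norm_num)
  have hr' : (r : ℂ) ≠ 0 := Complex.ofReal_ne_zero.2 hr.ne'
  let Ψ := Φ.trans ((Homeomorph.refl ℂ).prodCongr (Homeomorph.mulLeft₀ (r : ℂ) hr'))
  have hΨ (p) : (∀ l ∈ L', p ∉ l) ↔ Ψ p ∈ lineComplement (L'.image α) f := by
    change _ ↔ ∀ a ∈ L'.image α, (Ψ p).1 ≠ a + f a * (Ψ p).2
    rw [Finset.forall_mem_image]
    refine forall₂_congr fun l hl => not_congr ?_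
    have hfl : f (α l) = μ l / r := by
      rw [hf _ (Finset.mem_image_of_mem α hl)]
      exact congrArg (fun l => μ l / r) (hα.leftInvOn_invFunOn hl)
    rw [hgraph l hl, hfl]
    change _ ↔ (Φ p).1 = α l + (μ l / r : ℝ) * (r * (Φ p).2)
    rw [Complex.ofReal_div, ← mul_assoc, div_mul_cancel₀ _ hr']
  refine ⟨L'.image α, f, hlip, hb, Ψ, hΨ, fun p => ?_⟩
  rw [Finset.forall_mem_insert, hΨ, haxis, and_comm]
  exact and_congr_right' (mul_ne_zero_iff_left hr').symm

lemma nonempty_mulEquiv_of_homeomorph {X Y : Type} [TopologicalSpace X] [TopologicalSpace Y]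
    (e : X ≃ₜ Y) (x : X) : Nonempty (FundamentalGroup X x ≃* FundamentalGroup Y (e x)) :=
  ⟨(FundamentalGroupoidFunctor.equivOfHomotopyEquiv
    e.toHomotopyEquiv).fullyFaithfulFunctor.mulEquivEnd (.mk x)⟩

end Coordinates

end SimpleLine

/-- If a real line arrangement `𝓛 = 𝓛' ∪ {L₀}` is such that `L₀` is a
simple line (it meets every line of `𝓛'` in a distinct double point), then
`π₁(ℂ² \ 𝓛) ≅ π₁(ℂ² \ 𝓛') × ℤ`. -/
theorem affine_simple_line_splits_Z
    (L' : Finset (Set (ℂ × ℂ))) (L₀ : Set (ℂ × ℂ))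
    (hL' : ∀ l ∈ L', IsRealCLine l) (hL₀ : IsRealCLine L₀) (hne : L₀ ∉ L')
    -- `L₀` meets every line of `𝓛'`:
    (hmeet : ∀ l ∈ L', ∃ p, p ∈ L₀ ∧ p ∈ l)
    -- each such intersection point is a double point of `𝓛` (no third line through it),
    -- so in particular the intersection points with distinct lines of `𝓛'` are distinct:
    (hsimple : ∀ l ∈ L', ∀ p, p ∈ L₀ → p ∈ l → ∀ l' ∈ L', l' ≠ l → p ∉ l')
    (x₀ : ℂ × ℂ) (hx₀ : ∀ l ∈ insert L₀ L', x₀ ∉ l) :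
    Nonempty
      (FundamentalGroup {p : ℂ × ℂ // ∀ l ∈ insert L₀ L', p ∉ l} ⟨x₀, hx₀⟩ ≃*
        (FundamentalGroup {p : ℂ × ℂ // ∀ l ∈ L', p ∉ l}
            ⟨x₀, fun l hl => hx₀ l (Finset.mem_insert_of_mem hl)⟩ ×
          Multiplicative ℤ)) := by
  obtain ⟨A, f, hlip, hb, Φ, hS', hS⟩ :=
    SimpleLine.exists_normalForm hL' hL₀ hne hmeet hsimple
  obtain ⟨e⟩ := SimpleLine.nonempty_mulEquiv_of_homeomorph (Φ.subtype hS) ⟨x₀, hx₀⟩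
  obtain ⟨e'⟩ := SimpleLine.nonempty_mulEquiv_of_homeomorph (Φ.subtype hS')
    ⟨x₀, fun l hl => hx₀ l (Finset.mem_insert_of_mem hl)⟩
  obtain ⟨split⟩ := SimpleLine.nonempty_mulEquiv_axisLineComplement A hlip hb
    (Φ.subtype hS ⟨x₀, hx₀⟩)
  exact ⟨(e.trans split).trans (.prodCongr e'.symm (.refl _))⟩
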